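/- arXiv:2501.14928 — 4 statements merged into one kernel-verified Lean document; each statement's English description precedes it below -/
import Mathlib

section
/- Private DEC upper bound for linear regression under L1 estimation error: There is a universal constant C with the following property. Let d ≥ 1 and let X be a finite subset of the closed Euclidean unit ball of ℝ^d. For ν ∈ Δ(X) and θ in the unit ball B^d(1), let M_{ν,θ} be the distribution of (x,y) ∈ X × {−1,1} with x ∼ ν and E[y | x] = ⟨θ, x⟩, and let M_Lin := { M_{ν,θ} : ν ∈ Δ(X), θ ∈ B^d(1) }. Take decision space Π = B^d(1) and loss L₁(M_{ν,θ}, θ̂) := E_{x∼ν} |⟨x, θ̂ − θ⟩|. Then for every γ > 0 and every probability distribution M̄ on X × {−1,1}: p-dec^{o,LDP}_γ(M_Lin, M̄) ≤ C·d/γ. Consequently, for every ε > 0: p-dec^{LDP}_ε(M_Lin) ≤ 2·√(C·d)·ε. -/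
/-!
Both bounds follow from one explicit strategy. Fix the reference `M̄` with marginal `ν'` on `X`,
and put `η = γ / 181`, `lam = 1 / η`.

*Geometry.* There is a positive definite `U` solving
`U = lam² I + ∑ ν'(x) x xᵀ / r(x)` with `r(x) = ‖U^{-1/2} x‖` (`exists_info`). In logarithmic
coordinates for the weights `1 / r(x)` the right-hand side defines a `1/2`-contraction, so Banach's
theorem applies. Taking the trace against `U⁻¹` gives `∑ ν'(x) r(x) ≤ d` (`sum_rad_le`), and
`U ≥ lam² I` gives `lam r(x) ≤ ‖x‖ ≤ 1`.

*Decision.* `θ̂` minimises the least squares functional with weights `1 / r(x)` under `M̄` on the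
unit ball; its first-order optimality condition is all that is used.

*Tests.* With `g` standard Gaussian, three tests are played with probability `1/3` each:
`1/2 + (y - ⟪θ̂, x⟫) sin⟪g, u(x)⟫ / 4`, `1/2 + κ(x) cos⟪g, u'(x)⟫ / 2` and `lam r(x)`, where `u(x)` and
`u'(x)` are the unit vectors along `U^{-1/2} x` and `U^{-1/4} x`. Since
`E sin⟪g, u⟫ sin⟪g, v⟫ = e⁻¹ sinh⟪u, v⟫` for unit vectors, and all powers of the inner product are
positive semidefinite kernels, the second moment of `∑ b(x) sin⟪g, u(x)⟫` dominates
`e⁻¹ ‖∑ b(x) u(x)‖²`; likewise the cosines dominate the Frobenius norm of `∑ b(x) u(x) u(x)ᵀ`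
(`gauss_sum_sin`, `gauss_sum_cos`). Hence there is no dimension factor in `sign_test_bound` and
`cov_test_bound`.

*Conclusion.* For `M_{ν,θ}` put `δ = θ - θ̂`, `P² = ⟪δ, U δ⟫`, and let `τ²` be the test error. The
tests bound `Q = ∑ ν(x) ⟪δ, x⟫² / r(x)` by `12 P τ` and its difference with the same sum for `ν'` by
`17 P τ`, so `P² ≤ 4 lam² + 29 P τ`, whence `P ≤ 29 τ + 2 lam`. The third test gives
`∑ ν(x) r(x) ≤ d + 2 τ / lam`, and `|⟪δ, x⟫| ≤ (r(x) / η + η ⟪δ, x⟫² / r(x)) / 2` yields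
`loss ≤ 7 d / η + 181 η τ²` (`core_ineq`), i.e. `C = 7 · 181 = 1267`. The constrained bound is the
offset one at `γ = √(C d) / ε`.
-/

open MeasureTheory
open scoped ENNReal

/-- `D_ℓ(P, Q) := |E_{z ∼ P} ℓ(z) − E_{z ∼ Q} ℓ(z)|`. -/
noncomputable def Dl {Z : Type*} [MeasurableSpace Z] (ℓ : Z → ℝ) (P Q : Measure Z) : ℝ :=
  |(∫ z, ℓ z ∂P) - ∫ z, ℓ z ∂Q|

/-- A distribution `q ∈ Δ(Θ × L)` over pairs of a decision and a measurable `[0,1]`-valued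
test function on `Z`. -/
def IsTestDist {Θ Z : Type*} [MeasurableSpace Θ] [MeasurableSpace Z]
    (q : Measure (Θ × (Z → ℝ))) : Prop :=
  IsProbabilityMeasure q ∧
    q {pl | Measurable pl.2 ∧ ∀ z, pl.2 z ∈ Set.Icc (0 : ℝ) 1} = 1

/-- `E_{(π,ℓ)∼q} D_ℓ(M_i(π), M̄(π))²`. -/
noncomputable def testErr {Θ Z ι : Type*} [MeasurableSpace Θ] [MeasurableSpace Z]
    (Ms : ι → Θ → Measure Z) (Mb : Θ → Measure Z)
    (q : Measure (Θ × (Z → ℝ))) (i : ι) : ℝ :=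
  ∫ pl, (Dl pl.2 (Ms i pl.1) (Mb pl.1)) ^ 2 ∂q

/-- The private PAC-DEC of the model class `(Ms i)_{i : ι}` with loss `loss` and reference
model `Mb`:
`p-dec^{LDP}_ε(M, M̄) := inf_{p ∈ Δ(Θ), q ∈ Δ(Θ×L)}
  sup { E_{π∼p} L(M,π) : M ∈ M, E_{(π,ℓ)∼q} D_ℓ(M(π), M̄(π))² ≤ ε² }`,
where the supremum over the empty set is `−∞` (i.e. `⊥` in `EReal`). -/
noncomputable def pdecLDP {Θ Z ι : Type*} [MeasurableSpace Θ] [MeasurableSpace Z]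
    (Ms : ι → Θ → Measure Z) (loss : ι → Θ → ℝ) (Mb : Θ → Measure Z) (ε : ℝ) : EReal :=
  ⨅ (p : {p : Measure Θ // IsProbabilityMeasure p})
    (q : {q : Measure (Θ × (Z → ℝ)) // IsTestDist q}),
    sSup {x : EReal | ∃ i : ι, testErr Ms Mb q.1 i ≤ ε ^ 2 ∧
      x = ((∫ π, loss i π ∂p.1 : ℝ) : EReal)}

open scoped RealInnerProductSpace

/-- The offset private PAC-DEC
`p-dec^{o,LDP}_γ(M, M̄) := inf_{p ∈ Δ(Θ), q ∈ Δ(Θ×L)}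
  sup_{M ∈ M} { E_{π∼p} L(M,π) − γ E_{(π,ℓ)∼q} D_ℓ(M(π), M̄(π))² }`. -/
noncomputable def pdecOffLDP {Θ Z ι : Type*} [MeasurableSpace Θ] [MeasurableSpace Z]
    (Ms : ι → Θ → Measure Z) (loss : ι → Θ → ℝ) (Mb : Θ → Measure Z) (γ : ℝ) : EReal :=
  ⨅ (p : {p : Measure Θ // IsProbabilityMeasure p})
    (q : {q : Measure (Θ × (Z → ℝ)) // IsTestDist q}),
    ⨆ i : ι, (((∫ π, loss i π ∂p.1) - γ * testErr Ms Mb q.1 i : ℝ) : EReal)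

/-- The linear model `M_{ν,θ}`: the distribution of `(x, y) ∈ X × {−1,1}` (labels encoded
by `Bool`, `true ↔ +1`) with `x ∼ ν` and `E[y | x] = ⟪θ, x⟫`. -/
noncomputable def linModel {d : ℕ} (X : Finset (EuclideanSpace ℝ (Fin d)))
    (ν : Measure {x // x ∈ X}) (θ : EuclideanSpace ℝ (Fin d)) :
    Measure ({x // x ∈ X} × Bool) :=
  ∑ x : {x // x ∈ X}, ν {x} •
    (ENNReal.ofReal ((1 + ⟪θ, (x : EuclideanSpace ℝ (Fin d))⟫) / 2) •
        Measure.dirac (x, true) +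
      ENNReal.ofReal ((1 - ⟪θ, (x : EuclideanSpace ℝ (Fin d))⟫) / 2) •
        Measure.dirac (x, false))

/-- The class `M_Lin = {M_{ν,θ} : ν ∈ Δ(X), θ ∈ B^d(1)}` of linear models, indexed by the
pair `(ν, θ)`; the decision space is `B^d(1)`. -/
noncomputable def linMs {d : ℕ} (X : Finset (EuclideanSpace ℝ (Fin d))) :
    ({ν : Measure {x // x ∈ X} // IsProbabilityMeasure ν} ×
        {θ : EuclideanSpace ℝ (Fin d) // ‖θ‖ ≤ 1}) →
      {θ : EuclideanSpace ℝ (Fin d) // ‖θ‖ ≤ 1} → Measure ({x // x ∈ X} × Bool) :=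
  fun iv _ => linModel X iv.1.1 iv.2.1

/-- The `L₁` estimation error `L₁(M_{ν,θ}, θ̂) := E_{x∼ν} |⟪x, θ̂ − θ⟫|`. -/
noncomputable def linLossL1 {d : ℕ} (X : Finset (EuclideanSpace ℝ (Fin d))) :
    ({ν : Measure {x // x ∈ X} // IsProbabilityMeasure ν} ×
        {θ : EuclideanSpace ℝ (Fin d) // ‖θ‖ ≤ 1}) →
      {θ : EuclideanSpace ℝ (Fin d) // ‖θ‖ ≤ 1} → ℝ :=
  fun iv θhat => ∑ x : {x // x ∈ X},
    (iv.1.1 {x}).toReal * |⟪(x : EuclideanSpace ℝ (Fin d)), (θhat : _) - (iv.2 : _)⟫|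

/-- The class of all finite mixtures of linear models, i.e. `co(M_Lin)`. -/
def coLin {d : ℕ} (X : Finset (EuclideanSpace ℝ (Fin d))) :
    Set (Measure ({x // x ∈ X} × Bool)) :=
  {Mb | ∃ (n : ℕ) (w : Fin n → ℝ) (ν : Fin n → Measure {x // x ∈ X})
      (θ : Fin n → EuclideanSpace ℝ (Fin d)),
      (∀ k, 0 ≤ w k) ∧ (∑ k, w k) = 1 ∧ (∀ k, IsProbabilityMeasure (ν k)) ∧
      (∀ k, ‖θ k‖ ≤ 1) ∧ Mb = ∑ k, ENNReal.ofReal (w k) • linModel X (ν k) (θ k)}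

open ProbabilityTheory

/-! ### Second moments of random trigonometric sums -/

theorem gauss_cos {d : ℕ} (u : EuclideanSpace ℝ (Fin d)) :
    ∫ g, Real.cos ⟪g, u⟫ ∂(stdGaussian (EuclideanSpace ℝ (Fin d))) = Real.exp (-‖u‖ ^ 2 / 2) := by
  have h := charFun_stdGaussian (E := EuclideanSpace ℝ (Fin d)) u
  rw [charFun_apply] at h
  have hre := congrArg Complex.re h
  rw [show (∫ x, Complex.exp (⟪x, u⟫ * Complex.I) ∂(stdGaussian (EuclideanSpace ℝ (Fin d)))).re
    = ∫ x, (Complex.exp (⟪x, u⟫ * Complex.I)).re ∂(stdGaussian (EuclideanSpace ℝ (Fin d))) from ?_] at hre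
  · simp only [Complex.exp_ofReal_mul_I_re] at hre
    rw [hre, show (-(‖u‖ : ℂ) ^ 2 / 2) = ((-‖u‖ ^ 2 / 2 : ℝ) : ℂ) by push_cast; ring, ← Complex.ofReal_exp, Complex.ofReal_re]
  · refine (integral_re (𝕜 := ℂ) ?_).symm
    refine Integrable.of_bound (C := 1) ?_ ?_
    · exact Measurable.aestronglyMeasurable (by fun_prop)
    · exact ae_of_all _ fun x => by rw [Complex.norm_exp_ofReal_mul_I]

theorem integrable_trig {d : ℕ} (f : EuclideanSpace ℝ (Fin d) → ℝ) (hf : Continuous f) (C : ℝ)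
    (hC : ∀ g, |f g| ≤ C) : Integrable f (stdGaussian (EuclideanSpace ℝ (Fin d))) :=
  Integrable.of_bound (C := C) hf.measurable.aestronglyMeasurable (ae_of_all _ hC)

theorem gauss_sin_sin {d : ℕ} (u v : EuclideanSpace ℝ (Fin d)) :
    ∫ g, Real.sin ⟪g, u⟫ * Real.sin ⟪g, v⟫ ∂(stdGaussian (EuclideanSpace ℝ (Fin d))) =
      Real.exp (-‖u‖ ^ 2 / 2) * Real.exp (-‖v‖ ^ 2 / 2) * Real.sinh ⟪u, v⟫ := by
  have h1 : ∀ g : EuclideanSpace ℝ (Fin d), Real.sin ⟪g, u⟫ * Real.sin ⟪g, v⟫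
      = (Real.cos ⟪g, u - v⟫ - Real.cos ⟪g, u + v⟫) / 2 := fun g => by
    rw [inner_sub_right, inner_add_right, Real.cos_sub, Real.cos_add]; ring
  simp_rw [h1]
  rw [integral_div, integral_sub, gauss_cos, gauss_cos, Real.sinh_eq,
    @norm_sub_sq_real, @norm_add_sq_real, ← Real.exp_add, mul_div_assoc', mul_sub,
    ← Real.exp_add, ← Real.exp_add]
  · congr 3 <;> ring
  · exact integrable_trig _ (by fun_prop) 1 fun g => Real.abs_cos_le_one _
  · exact integrable_trig _ (by fun_prop) 1 fun g => Real.abs_cos_le_one _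

theorem gauss_cos_cos {d : ℕ} (u v : EuclideanSpace ℝ (Fin d)) :
    ∫ g, Real.cos ⟪g, u⟫ * Real.cos ⟪g, v⟫ ∂(stdGaussian (EuclideanSpace ℝ (Fin d))) =
      Real.exp (-‖u‖ ^ 2 / 2) * Real.exp (-‖v‖ ^ 2 / 2) * Real.cosh ⟪u, v⟫ := by
  have h1 : ∀ g : EuclideanSpace ℝ (Fin d), Real.cos ⟪g, u⟫ * Real.cos ⟪g, v⟫
      = (Real.cos ⟪g, u - v⟫ + Real.cos ⟪g, u + v⟫) / 2 := fun g => by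
    rw [inner_sub_right, inner_add_right, Real.cos_sub, Real.cos_add]; ring
  simp_rw [h1]
  rw [integral_div, integral_add, gauss_cos, gauss_cos, Real.cosh_eq,
    @norm_sub_sq_real, @norm_add_sq_real, ← Real.exp_add, mul_div_assoc', mul_add,
    ← Real.exp_add, ← Real.exp_add]
  · congr 3 <;> ring
  · exact integrable_trig _ (by fun_prop) 1 fun g => Real.abs_cos_le_one _
  · exact integrable_trig _ (by fun_prop) 1 fun g => Real.abs_cos_le_one _

/-- Powers of the inner product are positive semidefinite kernels: the feature map is the tensor
power, written in coordinates indexed by `Fin n → Fin d`. -/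
theorem power_kernel {ι : Type*} [Fintype ι] {d : ℕ} (c : ι → ℝ) (u : ι → EuclideanSpace ℝ (Fin d))
    (n : ℕ) : ∑ x, ∑ y, c x * c y * ⟪u x, u y⟫ ^ n
      = ∑ p : Fin n → Fin d, (∑ x, c x * ∏ j, u x (p j)) ^ 2 := by
  have h1 : ∀ x y, ⟪u x, u y⟫ ^ n = ∑ p : Fin n → Fin d, (∏ j, u x (p j)) * ∏ j, u y (p j) := by
    intro x y
    rw [PiLp.inner_apply, Fintype.sum_pow]
    refine Finset.sum_congr rfl fun p _ => ?_
    rw [← Finset.prod_mul_distrib]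
    exact Finset.prod_congr rfl fun j _ => by simp [mul_comm]
  simp_rw [h1, Finset.mul_sum, sq, Finset.sum_mul_sum]
  conv_rhs => rw [Finset.sum_comm]
  refine Finset.sum_congr rfl fun x _ => ?_
  conv_rhs => rw [Finset.sum_comm]
  exact Finset.sum_congr rfl fun y _ => Finset.sum_congr rfl fun p _ => by ring

/-- The linear term of the power series of `sinh`; the other terms are nonnegative. -/
theorem sinh_kernel_ge {ι : Type*} [Fintype ι] {d : ℕ} (c : ι → ℝ)
    (u : ι → EuclideanSpace ℝ (Fin d)) :
    ∑ i, (∑ x, c x * u x i) ^ 2 ≤ ∑ x, ∑ y, c x * c y * Real.sinh ⟪u x, u y⟫ := by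
  have h : HasSum (fun n : ℕ => (∑ x, ∑ y, c x * c y * ⟪u x, u y⟫ ^ (2 * n + 1)) /
      (2 * n + 1).factorial) (∑ x, ∑ y, c x * c y * Real.sinh ⟪u x, u y⟫) := by
    simp_rw [Finset.sum_div, mul_div_assoc]
    exact hasSum_sum fun x _ => hasSum_sum fun y _ => (Real.hasSum_sinh _).mul_left _
  refine le_trans (le_of_eq ?_) (le_hasSum h 0 fun n _ => ?_)
  · simp only [power_kernel]
    rw [← (Equiv.funUnique (Fin 1) (Fin d)).symm.sum_comp]
    simp
  · rw [power_kernel]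
    positivity

/-- The quadratic term of the power series of `cosh`; the other terms are nonnegative. -/
theorem cosh_kernel_ge {ι : Type*} [Fintype ι] {d : ℕ} (c : ι → ℝ)
    (u : ι → EuclideanSpace ℝ (Fin d)) :
    (∑ i, ∑ j, (∑ x, c x * (u x i * u x j)) ^ 2) / 2
      ≤ ∑ x, ∑ y, c x * c y * Real.cosh ⟪u x, u y⟫ := by
  have h : HasSum (fun n : ℕ => (∑ x, ∑ y, c x * c y * ⟪u x, u y⟫ ^ (2 * n)) /
      (2 * n).factorial) (∑ x, ∑ y, c x * c y * Real.cosh ⟪u x, u y⟫) := by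
    simp_rw [Finset.sum_div, mul_div_assoc]
    exact hasSum_sum fun x _ => hasSum_sum fun y _ => (Real.hasSum_cosh _).mul_left _
  refine le_trans (le_of_eq ?_) (le_hasSum h 1 fun n _ => ?_)
  · simp only [power_kernel]
    rw [← (finTwoArrowEquiv (Fin d)).symm.sum_comp, Fintype.sum_prod_type]
    simp
  · rw [power_kernel]
    positivity

/-- The second moment of a random sine sum controls the weighted sum of the directions in Euclidean
norm, without any dimension factor. -/
theorem gauss_sum_sin {ι : Type*} [Fintype ι] {d : ℕ} (b : ι → ℝ)
    (u : ι → EuclideanSpace ℝ (Fin d)) :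
    ∑ i, (∑ x, b x * Real.exp (-‖u x‖ ^ 2 / 2) * u x i) ^ 2 ≤
      ∫ g, (∑ x, b x * Real.sin ⟪g, u x⟫) ^ 2 ∂(stdGaussian (EuclideanSpace ℝ (Fin d))) := by
  refine (sinh_kernel_ge _ u).trans (le_of_eq ?_)
  simp_rw [sq, Finset.sum_mul_sum]
  rw [integral_finsetSum]
  · refine Finset.sum_congr rfl fun x _ => ?_
    rw [integral_finsetSum]
    · refine Finset.sum_congr rfl fun y _ => ?_
      simp_rw [mul_mul_mul_comm]
      rw [integral_const_mul, gauss_sin_sin]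
      ring_nf
    · intro y _
      simp_rw [mul_mul_mul_comm]
      refine (integrable_trig _ (by fun_prop) 1 fun g => ?_).const_mul _
      rw [abs_mul]
      exact mul_le_one₀ (Real.abs_sin_le_one _) (abs_nonneg _) (Real.abs_sin_le_one _)
  · intro x _
    refine integrable_finsetSum _ fun y _ => ?_
    simp_rw [mul_mul_mul_comm]
    refine (integrable_trig _ (by fun_prop) 1 fun g => ?_).const_mul _
    rw [abs_mul]
    exact mul_le_one₀ (Real.abs_sin_le_one _) (abs_nonneg _) (Real.abs_sin_le_one _)

/-- The second moment of a random cosine sum controls the weighted sum of the matrices `u uᵀ` in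
Frobenius norm. -/
theorem gauss_sum_cos {ι : Type*} [Fintype ι] {d : ℕ} (b : ι → ℝ)
    (u : ι → EuclideanSpace ℝ (Fin d)) :
    (∑ i, ∑ j, (∑ x, b x * Real.exp (-‖u x‖ ^ 2 / 2) * (u x i * u x j)) ^ 2) / 2 ≤
      ∫ g, (∑ x, b x * Real.cos ⟪g, u x⟫) ^ 2 ∂(stdGaussian (EuclideanSpace ℝ (Fin d))) := by
  refine (cosh_kernel_ge _ u).trans (le_of_eq ?_)
  simp_rw [sq, Finset.sum_mul_sum]
  rw [integral_finsetSum]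
  · refine Finset.sum_congr rfl fun x _ => ?_
    rw [integral_finsetSum]
    · refine Finset.sum_congr rfl fun y _ => ?_
      simp_rw [mul_mul_mul_comm]
      rw [integral_const_mul, gauss_cos_cos]
      ring_nf
    · intro y _
      simp_rw [mul_mul_mul_comm]
      refine (integrable_trig _ (by fun_prop) 1 fun g => ?_).const_mul _
      rw [abs_mul]
      exact mul_le_one₀ (Real.abs_cos_le_one _) (abs_nonneg _) (Real.abs_cos_le_one _)
  · intro x _
    refine integrable_finsetSum _ fun y _ => ?_
    simp_rw [mul_mul_mul_comm]
    refine (integrable_trig _ (by fun_prop) 1 fun g => ?_).const_mul _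
    rw [abs_mul]
    exact mul_le_one₀ (Real.abs_cos_le_one _) (abs_nonneg _) (Real.abs_cos_le_one _)

/-! ### A self-consistent information matrix -/

/-- The quadratic form of `lam² I + ∑ ν(x) e^{b(x)} v(x) v(x)ᵀ`. -/
noncomputable def infoForm {ι : Type*} [Fintype ι] {d : ℕ} (lam : ℝ) (ν : ι → ℝ)
    (v : ι → EuclideanSpace ℝ (Fin d)) (b : ι → ℝ) (w : EuclideanSpace ℝ (Fin d)) : ℝ :=
  lam ^ 2 * ‖w‖ ^ 2 + ∑ x, ν x * Real.exp (b x) * ⟪w, v x⟫ ^ 2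

/-- The quadratic form of the inverse of the matrix of `infoForm`, in its variational form. The junk
value of the quotient at `w = 0` is `0`, which does not affect the supremum. -/
noncomputable def dualForm {ι : Type*} [Fintype ι] {d : ℕ} (lam : ℝ) (ν : ι → ℝ)
    (v : ι → EuclideanSpace ℝ (Fin d)) (b : ι → ℝ) (z : EuclideanSpace ℝ (Fin d)) : ℝ :=
  ⨆ w, ⟪w, z⟫ ^ 2 / infoForm lam ν v b w

section
variable {ι : Type*} [Fintype ι] {d : ℕ} {lam : ℝ} {ν : ι → ℝ}
  {v : ι → EuclideanSpace ℝ (Fin d)}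

theorem infoForm_ge (hν : ∀ x, 0 ≤ ν x) (b : ι → ℝ) (w : EuclideanSpace ℝ (Fin d)) :
    lam ^ 2 * ‖w‖ ^ 2 ≤ infoForm lam ν v b w := by
  unfold infoForm
  have : 0 ≤ ∑ x, ν x * Real.exp (b x) * ⟪w, v x⟫ ^ 2 :=
    Finset.sum_nonneg fun x _ => by have := hν x; positivity
  linarith

theorem infoForm_nonneg (hν : ∀ x, 0 ≤ ν x) (b : ι → ℝ) (w : EuclideanSpace ℝ (Fin d)) :
    0 ≤ infoForm lam ν v b w := le_trans (by positivity) (infoForm_ge hν b w)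

theorem infoForm_pos (hlam : 0 < lam) (hν : ∀ x, 0 ≤ ν x) (b : ι → ℝ)
    {w : EuclideanSpace ℝ (Fin d)} (hw : w ≠ 0) : 0 < infoForm lam ν v b w :=
  lt_of_lt_of_le (by have := norm_pos_iff.2 hw; positivity) (infoForm_ge hν b w)

theorem dualForm_bdd (hlam : 0 < lam) (hν : ∀ x, 0 ≤ ν x) (b : ι → ℝ)
    (z : EuclideanSpace ℝ (Fin d)) :
    BddAbove (Set.range fun w => ⟪w, z⟫ ^ 2 / infoForm lam ν v b w) := by
  refine ⟨‖z‖ ^ 2 / lam ^ 2, ?_⟩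
  rintro _ ⟨w, rfl⟩
  rcases eq_or_ne w 0 with rfl | hw
  · simp only [inner_zero_left]
    rw [zero_pow two_ne_zero, zero_div]
    positivity
  · change ⟪w, z⟫ ^ 2 / infoForm lam ν v b w ≤ _
    rw [div_le_div_iff₀ (infoForm_pos hlam hν b hw) (by positivity)]
    have h1 : ⟪w, z⟫ ^ 2 ≤ (‖w‖ * ‖z‖) ^ 2 := by
      rw [← sq_abs]
      exact pow_le_pow_left₀ (abs_nonneg _) (abs_real_inner_le_norm w z) 2
    have h2 := mul_le_mul_of_nonneg_left (infoForm_ge (lam := lam) (v := v) hν b w) (sq_nonneg ‖z‖)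
    nlinarith [sq_nonneg lam]

theorem dualForm_pos (hlam : 0 < lam) (hν : ∀ x, 0 ≤ ν x) (b : ι → ℝ)
    {z : EuclideanSpace ℝ (Fin d)} (hz : z ≠ 0) : 0 < dualForm lam ν v b z := by
  refine lt_of_lt_of_le ?_ (le_ciSup (dualForm_bdd hlam hν b z) z)
  have := infoForm_pos (v := v) hlam hν b hz
  have : 0 < ⟪z, z⟫ := real_inner_self_pos.2 hz
  positivity

/-- Changing the log-weights by at most `t` changes `dualForm` by a factor of at most `e^t`. This is
the source of the contraction in `exists_fixed`. -/
theorem dualForm_ratio (hlam : 0 < lam) (hν : ∀ x, 0 ≤ ν x) {b b' : ι → ℝ} {t : ℝ} (ht : 0 ≤ t)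
    (h : ∀ x, b x ≤ b' x + t) (z : EuclideanSpace ℝ (Fin d)) :
    dualForm lam ν v b' z ≤ Real.exp t * dualForm lam ν v b z := by
  refine ciSup_le fun w => ?_
  rcases eq_or_ne w 0 with rfl | hw
  · simp only [inner_zero_left]
    rw [zero_pow two_ne_zero, zero_div]
    refine mul_nonneg (Real.exp_pos _).le (Real.iSup_nonneg fun w => ?_)
    have := infoForm_nonneg (lam := lam) (v := v) hν b w
    positivity
  have h1 : infoForm lam ν v b w ≤ Real.exp t * infoForm lam ν v b' w := by
    unfold infoForm
    rw [mul_add, Finset.mul_sum]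
    refine add_le_add (le_mul_of_one_le_left (by positivity) (Real.one_le_exp ht))
      (Finset.sum_le_sum fun x _ => ?_)
    have h3 : Real.exp (b x) ≤ Real.exp t * Real.exp (b' x) := by
      rw [← Real.exp_add]; exact Real.exp_le_exp.2 (by linarith [h x])
    have := mul_le_mul_of_nonneg_left h3 (mul_nonneg (hν x) (sq_nonneg ⟪w, v x⟫))
    linarith
  have h2 := mul_le_mul_of_nonneg_left (le_ciSup (dualForm_bdd (v := v) hlam hν b z) w) (Real.exp_pos t).le
  refine le_trans ?_ h2
  have p1 := infoForm_pos (v := v) hlam hν b hw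
  have p2 := infoForm_pos (v := v) hlam hν b' hw
  rw [mul_div_assoc', div_le_div_iff₀ p2 p1]
  nlinarith [mul_le_mul_of_nonneg_left h1 (sq_nonneg ⟪w, z⟫)]

/-- The map `b ↦ -log(dualForm b) / 2` is a `1/2`-contraction for the sup norm; its fixed point gives
weights `e^b = 1 / √dualForm`. -/
theorem exists_fixed (hlam : 0 < lam) (hν : ∀ x, 0 ≤ ν x) :
    ∃ b : ι → ℝ, ∀ x, v x ≠ 0 → Real.exp (b x) = 1 / √(dualForm lam ν v b (v x)) := by
  let f : (ι → ℝ) → (ι → ℝ) := fun b x => -(Real.log (dualForm lam ν v b (v x))) / 2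
  have key : ∀ b b' x, f b x - f b' x ≤ 1 / 2 * dist b b' := by
    intro b b' x
    by_cases hx : v x = 0
    · have h0 : ∀ b, dualForm lam ν v b (v x) = 0 := fun b => by simp [dualForm, hx]
      simp only [f, h0, sub_self]
      positivity
    have h := dualForm_ratio (v := v) hlam hν (b := b) (b' := b') dist_nonneg (fun y => by
      have := dist_le_pi_dist b b' y
      rw [Real.dist_eq] at this
      linarith [le_abs_self (b y - b' y)]) (v x)
    have h2 := Real.log_le_log (dualForm_pos hlam hν b' hx) h
    rw [Real.log_mul (Real.exp_pos _).ne' (dualForm_pos hlam hν b hx).ne', Real.log_exp] at h2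
    simp only [f]
    linarith
  have hc : ContractingWith (1 / 2) f := by
    refine ⟨by rw [← NNReal.coe_lt_coe]; norm_num, LipschitzWith.of_dist_le_mul fun b b' => ?_⟩
    refine (dist_pi_le_iff (by positivity)).2 fun x => ?_
    rw [Real.dist_eq, abs_le]
    have h1 := key b b' x
    have h2 := key b' b x
    rw [dist_comm] at h2
    push_cast
    constructor <;> linarith
  obtain ⟨b, hb, -⟩ := hc.exists_fixedPoint 0 (edist_ne_top _ _)
  refine ⟨b, fun x hx => ?_⟩
  have h1 : b x = -(Real.log (dualForm lam ν v b (v x))) / 2 := (congrFun hb x).symm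
  have hp := dualForm_pos (v := v) hlam hν b hx
  rw [h1, neg_div, Real.exp_neg, ← Real.log_sqrt hp.le, Real.exp_log (Real.sqrt_pos.2 hp), one_div]

/-- Spectral theorem for the information matrix. -/
theorem exists_diag (b : ι → ℝ) :
    ∃ (e : OrthonormalBasis (Fin d) ℝ (EuclideanSpace ℝ (Fin d))) (s : Fin d → ℝ),
      ∀ w, infoForm lam ν v b w = ∑ k, s k * ⟪e k, w⟫ ^ 2 := by
  let T : EuclideanSpace ℝ (Fin d) →ₗ[ℝ] EuclideanSpace ℝ (Fin d) :=
    lam ^ 2 • LinearMap.id + ∑ x, (ν x * Real.exp (b x)) •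
      ((innerSL ℝ (v x)).toLinearMap.smulRight (v x))
  have hT : ∀ w, T w = lam ^ 2 • w + ∑ x, (ν x * Real.exp (b x)) • (⟪v x, w⟫ • v x) := by
    intro w; simp [T, LinearMap.sum_apply]
  have hinner : ∀ w z, ⟪w, T z⟫ = lam ^ 2 * ⟪w, z⟫ +
      ∑ x, ν x * Real.exp (b x) * (⟪w, v x⟫ * ⟪z, v x⟫) := by
    intro w z
    rw [hT, inner_add_right, inner_sum, real_inner_smul_right]
    congr 1
    refine Finset.sum_congr rfl fun x _ => ?_
    rw [real_inner_smul_right, real_inner_smul_right, real_inner_comm (v x) z]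
    ring
  have hsym : T.IsSymmetric := by
    intro w z
    rw [hinner, real_inner_comm, hinner, real_inner_comm]
    congr 1
    exact Finset.sum_congr rfl fun x _ => by ring
  have hn : Module.finrank ℝ (EuclideanSpace ℝ (Fin d)) = d := by simp
  refine ⟨hsym.eigenvectorBasis hn, hsym.eigenvalues hn, fun w => ?_⟩
  have h1 : infoForm lam ν v b w = ⟪w, T w⟫ := by
    rw [hinner, infoForm, real_inner_self_eq_norm_sq]
    congr 1
    exact Finset.sum_congr rfl fun x _ => by ring
  rw [h1, ← (hsym.eigenvectorBasis hn).sum_inner_mul_inner w (T w)]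
  refine Finset.sum_congr rfl fun k _ => ?_
  rw [← hsym, hsym.apply_eigenvectorBasis, real_inner_smul_left, real_inner_comm]
  simp
  ring

theorem dualForm_eq {b : ι → ℝ} (hlam : 0 < lam) (hν : ∀ x, 0 ≤ ν x)
    {e : OrthonormalBasis (Fin d) ℝ (EuclideanSpace ℝ (Fin d))}
    {s : Fin d → ℝ} (hs : ∀ k, 0 < s k)
    (h : ∀ w, infoForm lam ν v b w = ∑ k, s k * ⟪e k, w⟫ ^ 2) (z : EuclideanSpace ℝ (Fin d)) :
    dualForm lam ν v b z = ∑ k, ⟪e k, z⟫ ^ 2 / s k := by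
  have hN : 0 ≤ ∑ k, ⟪e k, z⟫ ^ 2 / s k :=
    Finset.sum_nonneg fun k _ => by have := hs k; positivity
  apply le_antisymm
  · refine ciSup_le fun w => ?_
    rcases eq_or_ne w 0 with rfl | hw
    · simp only [inner_zero_left]
      rw [zero_pow two_ne_zero, zero_div]
      exact hN
    rw [div_le_iff₀ (infoForm_pos hlam hν b hw), h]
    have h1 : ⟪w, z⟫ = ∑ k, (⟪e k, z⟫ / √(s k)) * (√(s k) * ⟪e k, w⟫) := by
      rw [← e.sum_inner_mul_inner w z]
      refine Finset.sum_congr rfl fun k _ => ?_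
      have := Real.sqrt_pos.2 (hs k)
      rw [real_inner_comm]
      field_simp
    rw [h1]
    refine (Finset.sum_mul_sq_le_sq_mul_sq _ _ _).trans (le_of_eq ?_)
    congr 1
    · exact Finset.sum_congr rfl fun k _ => by rw [div_pow, Real.sq_sqrt (hs k).le]
    · exact Finset.sum_congr rfl fun k _ => by rw [mul_pow, Real.sq_sqrt (hs k).le]
  · let w : EuclideanSpace ℝ (Fin d) := ∑ k, (⟪e k, z⟫ / s k) • e k
    have hw : ∀ k, ⟪e k, w⟫ = ⟪e k, z⟫ / s k := fun k => by
      simp only [w]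
      exact e.orthonormal.inner_right_fintype _ k
    refine le_trans (le_of_eq ?_) (le_ciSup (dualForm_bdd hlam hν b z) w)
    have h1 : ⟪w, z⟫ = ∑ k, ⟪e k, z⟫ ^ 2 / s k := by
      rw [← e.sum_inner_mul_inner w z]
      refine Finset.sum_congr rfl fun k _ => ?_
      rw [real_inner_comm, hw]; ring
    have h2 : infoForm lam ν v b w = ∑ k, ⟪e k, z⟫ ^ 2 / s k := by
      rw [h]
      refine Finset.sum_congr rfl fun k _ => ?_
      rw [hw]
      have := (hs k).ne'
      field_simp
    rw [h1, h2, sq, mul_self_div_self]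

end

/-- A solution `U = lam² I + ∑ ν(x) v(x) v(x)ᵀ / ‖U^{-1/2} v(x)‖`, given by its eigenbasis `e` and
eigenvalues `s`. -/
theorem exists_info {ι : Type*} [Fintype ι] {d : ℕ} {lam : ℝ} {ν : ι → ℝ}
    (v : ι → EuclideanSpace ℝ (Fin d)) (hlam : 0 < lam) (hν : ∀ x, 0 ≤ ν x) :
    ∃ (e : OrthonormalBasis (Fin d) ℝ (EuclideanSpace ℝ (Fin d))) (s : Fin d → ℝ),
      (∀ k, lam ^ 2 ≤ s k) ∧ ∀ w, ∑ k, s k * ⟪e k, w⟫ ^ 2 = lam ^ 2 * ‖w‖ ^ 2 +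
        ∑ x, ν x * (⟪w, v x⟫ ^ 2 / √(∑ k, ⟪e k, v x⟫ ^ 2 / s k)) := by
  obtain ⟨b, hb⟩ := exists_fixed (v := v) hlam hν
  obtain ⟨e, s, h⟩ := exists_diag (lam := lam) (ν := ν) (v := v) b
  have hs : ∀ k, lam ^ 2 ≤ s k := fun k => by
    have h1 := infoForm_ge (lam := lam) (v := v) hν b (e k)
    rw [h, Finset.sum_eq_single k] at h1
    · simpa using h1
    · intro j _ hj
      rw [e.orthonormal.2 hj]; simp
    · simp
  refine ⟨e, s, hs, fun w => ?_⟩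
  rw [← h, infoForm]
  congr 1
  refine Finset.sum_congr rfl fun x _ => ?_
  by_cases hx : v x = 0
  · simp [hx]
  · rw [hb x hx, dualForm_eq hlam hν (fun k => lt_of_lt_of_le (by positivity) (hs k)) h]
    ring

/-! ### Tests adapted to the information matrix -/

/-- `‖U^{-1/2} z‖`, where `U` has eigenbasis `e` and eigenvalues `s`. -/
noncomputable def rad {d : ℕ} (e : OrthonormalBasis (Fin d) ℝ (EuclideanSpace ℝ (Fin d)))
    (s : Fin d → ℝ) (z : EuclideanSpace ℝ (Fin d)) : ℝ := √(∑ k, ⟪e k, z⟫ ^ 2 / s k)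

/-- The unit vector along `U^{-1/2} z`, in coordinates with respect to `e`; it is `0` for `z = 0`. -/
noncomputable def dir {d : ℕ} (e : OrthonormalBasis (Fin d) ℝ (EuclideanSpace ℝ (Fin d)))
    (s : Fin d → ℝ) (z : EuclideanSpace ℝ (Fin d)) : EuclideanSpace ℝ (Fin d) :=
  WithLp.toLp 2 fun k => ⟪e k, z⟫ / √(s k) / rad e s z

/-- `‖U^{-1/4} z‖² / ‖U^{-1/2} z‖`; replacing `s` by `√s` in `rad` turns `U^{-1/2}` into `U^{-1/4}`. -/
noncomputable def kap {d : ℕ} (e : OrthonormalBasis (Fin d) ℝ (EuclideanSpace ℝ (Fin d)))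
    (s : Fin d → ℝ) (z : EuclideanSpace ℝ (Fin d)) : ℝ :=
  rad e (fun k => √(s k)) z ^ 2 / rad e s z

section
variable {d : ℕ} {e : OrthonormalBasis (Fin d) ℝ (EuclideanSpace ℝ (Fin d))} {s : Fin d → ℝ}

theorem rad_nonneg (z : EuclideanSpace ℝ (Fin d)) : 0 ≤ rad e s z := Real.sqrt_nonneg _

theorem rad_sq (hs : ∀ k, 0 < s k) (z : EuclideanSpace ℝ (Fin d)) :
    rad e s z ^ 2 = ∑ k, ⟪e k, z⟫ ^ 2 / s k :=
  Real.sq_sqrt (Finset.sum_nonneg fun k _ => by have := hs k; positivity)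

theorem rad_zero : rad e s 0 = 0 := by simp [rad]

theorem rad_pos (hs : ∀ k, 0 < s k) {z : EuclideanSpace ℝ (Fin d)} (hz : z ≠ 0) :
    0 < rad e s z := by
  refine Real.sqrt_pos.2 (lt_of_le_of_ne (Finset.sum_nonneg fun k _ => by
    have := hs k; positivity) fun h => hz ?_)
  have h1 := (Finset.sum_eq_zero_iff_of_nonneg (fun k _ => by
    have := hs k; positivity)).1 h.symm
  have h2 : ∑ k, ⟪e k, z⟫ ^ 2 = 0 := Finset.sum_eq_zero fun k hk => by
    have h3 := h1 k hk
    have := (hs k).ne'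
    field_simp at h3
    simpa using h3
  have h4 := e.sum_sq_inner_right z
  rw [h2] at h4
  exact norm_eq_zero.1 (pow_eq_zero_iff two_ne_zero |>.1 h4.symm)

theorem norm_dir (hs : ∀ k, 0 < s k) {z : EuclideanSpace ℝ (Fin d)} (hz : z ≠ 0) :
    ‖dir e s z‖ ^ 2 = 1 := by
  have hr := rad_pos (e := e) hs hz
  rw [EuclideanSpace.real_norm_sq_eq]
  simp only [dir]
  simp_rw [div_pow, Real.sq_sqrt (hs _).le]
  rw [← Finset.sum_div, ← rad_sq hs, div_self (by positivity)]

theorem dir_zero : dir e s 0 = 0 := by ext; simp [dir]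

/-- `⟪U^{1/2} w, U^{-1/2} z⟫ = ⟪w, z⟫`, normalised. -/
theorem sum_dir (hs : ∀ k, 0 < s k) (w z : EuclideanSpace ℝ (Fin d)) :
    ∑ k, √(s k) * ⟪e k, w⟫ * dir e s z k = ⟪w, z⟫ / rad e s z := by
  rw [← e.sum_inner_mul_inner w z, Finset.sum_div]
  refine Finset.sum_congr rfl fun k _ => ?_
  have := Real.sqrt_pos.2 (hs k)
  simp only [dir]
  rw [real_inner_comm (e k) w]
  field_simp

/-- The Gaussian factor is `e^{-1/2}` for the unit vectors `dir e s z`, and irrelevant for `z = 0`. -/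
theorem exp_dir (hs : ∀ k, 0 < s k) (z : EuclideanSpace ℝ (Fin d)) (k : Fin d) :
    Real.exp (-‖dir e s z‖ ^ 2 / 2) * dir e s z k = Real.exp (-1 / 2) * dir e s z k := by
  rcases eq_or_ne z 0 with rfl | hz
  · simp [dir_zero]
  · rw [norm_dir hs hz]

/-- Cauchy–Schwarz between `U^{1/2} w` and `∑ b(x) dir(x)`, with the latter bounded through random
sines. -/
theorem sign_test_bound {ι : Type*} [Fintype ι] (hs : ∀ k, 0 < s k)
    (v : ι → EuclideanSpace ℝ (Fin d)) (b : ι → ℝ) (w : EuclideanSpace ℝ (Fin d)) :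
    (∑ x, b x * (⟪w, v x⟫ / rad e s (v x))) ^ 2 ≤ (∑ k, s k * ⟪e k, w⟫ ^ 2) * (Real.exp 1 *
      ∫ g, (∑ x, b x * Real.sin ⟪g, dir e s (v x)⟫) ^ 2 ∂(stdGaussian (EuclideanSpace ℝ (Fin d)))) := by
  have h := gauss_sum_sin b (fun x => dir e s (v x))
  have h1 : ∑ k, (∑ x, b x * Real.exp (-‖dir e s (v x)‖ ^ 2 / 2) * dir e s (v x) k) ^ 2
      = Real.exp (-1) * ∑ k, (∑ x, b x * dir e s (v x) k) ^ 2 := by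
    rw [Finset.mul_sum]
    refine Finset.sum_congr rfl fun k _ => ?_
    rw [show (-1 : ℝ) = -1 / 2 + -1 / 2 by norm_num, Real.exp_add, ← sq, ← mul_pow, Finset.mul_sum]
    congr 1
    refine Finset.sum_congr rfl fun x _ => ?_
    rw [mul_assoc, exp_dir hs]; ring
  have h2 : ∑ x, b x * (⟪w, v x⟫ / rad e s (v x))
      = ∑ k, (√(s k) * ⟪e k, w⟫) * (∑ x, b x * dir e s (v x) k) := by
    simp_rw [← sum_dir hs, Finset.mul_sum]
    rw [Finset.sum_comm]
    exact Finset.sum_congr rfl fun k _ => Finset.sum_congr rfl fun x _ => by ring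
  rw [h2]
  refine (Finset.sum_mul_sq_le_sq_mul_sq _ _ _).trans ?_
  have h3 : ∑ k, (√(s k) * ⟪e k, w⟫) ^ 2 = ∑ k, s k * ⟪e k, w⟫ ^ 2 :=
    Finset.sum_congr rfl fun k _ => by rw [mul_pow, Real.sq_sqrt (hs k).le]
  rw [h3]
  refine mul_le_mul_of_nonneg_left ?_ (Finset.sum_nonneg fun k _ => by have := hs k; positivity)
  rw [h1] at h
  refine le_trans (le_of_eq ?_) (mul_le_mul_of_nonneg_left h (Real.exp_pos 1).le)
  rw [← mul_assoc, ← Real.exp_add]; simp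

/-- Cauchy–Schwarz between the rank-one matrix of `U^{1/4} w` and `∑ b(x) kap(x) dir'(x) dir'(x)ᵀ`,
where `dir'` is taken along `U^{-1/4}`. The Frobenius norm of the former is
`⟪w, U^{1/2} w⟫ ≤ ‖U^{1/2} w‖ ‖w‖`. -/
theorem cov_test_bound {ι : Type*} [Fintype ι] (hs : ∀ k, 0 < s k)
    (v : ι → EuclideanSpace ℝ (Fin d)) (b : ι → ℝ) (w : EuclideanSpace ℝ (Fin d)) :
    (∑ x, b x * (⟪w, v x⟫ ^ 2 / rad e s (v x))) ^ 2 ≤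
      ((∑ k, s k * ⟪e k, w⟫ ^ 2) * ‖w‖ ^ 2) * (2 * Real.exp 1 *
      ∫ g, (∑ x, b x * kap e s (v x) * Real.cos ⟪g, dir e (fun k => √(s k)) (v x)⟫) ^ 2
        ∂(stdGaussian (EuclideanSpace ℝ (Fin d)))) := by
  set s' : Fin d → ℝ := fun k => √(s k) with hs'
  have hs'p : ∀ k, 0 < s' k := fun k => Real.sqrt_pos.2 (hs k)
  have h := gauss_sum_cos (fun x => b x * kap e s (v x)) (fun x => dir e s' (v x))
  have h1 : ∑ k, ∑ l, (∑ x, b x * kap e s (v x) * Real.exp (-‖dir e s' (v x)‖ ^ 2 / 2) *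
      (dir e s' (v x) k * dir e s' (v x) l)) ^ 2
      = Real.exp (-1) * ∑ k, ∑ l, (∑ x, b x * kap e s (v x) *
        (dir e s' (v x) k * dir e s' (v x) l)) ^ 2 := by
    simp_rw [Finset.mul_sum]
    refine Finset.sum_congr rfl fun k _ => Finset.sum_congr rfl fun l _ => ?_
    rw [show (-1 : ℝ) = -1 / 2 + -1 / 2 by norm_num, Real.exp_add, ← sq, ← mul_pow, Finset.mul_sum]
    congr 1
    refine Finset.sum_congr rfl fun x _ => ?_
    rw [mul_assoc, ← mul_assoc (Real.exp _), exp_dir hs'p]; ring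
  have hq : ∀ x, ⟪w, v x⟫ ^ 2 / rad e s (v x) =
      kap e s (v x) * (∑ k, √(s' k) * ⟪e k, w⟫ * dir e s' (v x) k) ^ 2 := by
    intro x
    rw [sum_dir hs'p, kap]
    rcases eq_or_ne (v x) 0 with h0 | h0
    · simp [h0]
    · have := rad_pos (e := e) hs'p h0
      have := rad_pos (e := e) hs h0
      field_simp
      rfl
  have h2 : ∑ x, b x * (⟪w, v x⟫ ^ 2 / rad e s (v x))
      = ∑ p : Fin d × Fin d, ((√(s' p.1) * ⟪e p.1, w⟫) * (√(s' p.2) * ⟪e p.2, w⟫)) *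
        (∑ x, b x * kap e s (v x) * (dir e s' (v x) p.1 * dir e s' (v x) p.2)) := by
    simp_rw [hq, sq, Finset.sum_mul_sum, Finset.mul_sum, Fintype.sum_prod_type]
    rw [Finset.sum_comm]
    refine Finset.sum_congr rfl fun k _ => ?_
    rw [Finset.sum_comm]
    exact Finset.sum_congr rfl fun l _ => Finset.sum_congr rfl fun x _ => by ring
  rw [h2]
  refine (Finset.sum_mul_sq_le_sq_mul_sq _ _ _).trans ?_
  have h3 : ∑ p : Fin d × Fin d, ((√(s' p.1) * ⟪e p.1, w⟫) * (√(s' p.2) * ⟪e p.2, w⟫)) ^ 2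
      = (∑ k, (√(s k) * ⟪e k, w⟫) * ⟪e k, w⟫) ^ 2 := by
    rw [sq, Finset.sum_mul_sum, Fintype.sum_prod_type]
    refine Finset.sum_congr rfl fun k _ => Finset.sum_congr rfl fun l _ => ?_
    simp only [mul_pow, Real.sq_sqrt (hs'p _).le]
    simp only [hs']
    ring
  have h4 : (∑ k, (√(s k) * ⟪e k, w⟫) * ⟪e k, w⟫) ^ 2 ≤ (∑ k, s k * ⟪e k, w⟫ ^ 2) * ‖w‖ ^ 2 := by
    refine (Finset.sum_mul_sq_le_sq_mul_sq _ _ _).trans (le_of_eq ?_)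
    rw [e.sum_sq_inner_right]
    congr 1
    exact Finset.sum_congr rfl fun k _ => by rw [mul_pow, Real.sq_sqrt (hs k).le]
  rw [h3]
  refine mul_le_mul h4 ?_ (Finset.sum_nonneg fun k _ => sq_nonneg _)
    (le_trans (sq_nonneg _) h4)
  rw [h1] at h
  refine le_trans (le_of_eq ?_) (mul_le_mul_of_nonneg_left h (mul_pos two_pos (Real.exp_pos 1)).le)
  rw [Fintype.sum_prod_type]
  have : Real.exp 1 * Real.exp (-1) = 1 := by rw [← Real.exp_add]; simp
  linear_combination (-∑ k, ∑ l, (∑ x, b x * kap e s (v x) *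
        (dir e s' (v x) k * dir e s' (v x) l)) ^ 2) * this

theorem kap_nonneg (z : EuclideanSpace ℝ (Fin d)) : 0 ≤ kap e s z :=
  div_nonneg (sq_nonneg _) (rad_nonneg _)

theorem kap_le (hs : ∀ k, 0 < s k) (z : EuclideanSpace ℝ (Fin d)) : kap e s z ≤ ‖z‖ := by
  rcases eq_or_ne z 0 with rfl | hz
  · simp [kap, rad_zero]
  rw [kap, div_le_iff₀ (rad_pos hs hz), rad_sq (fun k => Real.sqrt_pos.2 (hs k))]
  refine abs_le_of_sq_le_sq' ?_ (mul_nonneg (norm_nonneg _) (rad_nonneg _)) |>.2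
  rw [mul_pow, rad_sq hs, ← e.sum_sq_inner_right]
  refine le_trans (le_of_eq ?_) (le_trans (Finset.sum_mul_sq_le_sq_mul_sq Finset.univ
    (fun k => ⟪e k, z⟫) (fun k => ⟪e k, z⟫ / √(s k))) (le_of_eq ?_))
  · congr 1
    exact Finset.sum_congr rfl fun k _ => by ring
  · congr 1
    exact Finset.sum_congr rfl fun k _ => by rw [div_pow, Real.sq_sqrt (hs k).le]

theorem lam_rad_le {lam : ℝ} (hlam : 0 < lam) (hs : ∀ k, lam ^ 2 ≤ s k)
    (z : EuclideanSpace ℝ (Fin d)) : lam * rad e s z ≤ ‖z‖ := by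
  have hs0 : ∀ k, 0 < s k := fun k => lt_of_lt_of_le (by positivity) (hs k)
  refine abs_le_of_sq_le_sq' ?_ (norm_nonneg _) |>.2
  rw [mul_pow, rad_sq hs0, ← e.sum_sq_inner_right, Finset.mul_sum]
  refine Finset.sum_le_sum fun k _ => ?_
  have := hs0 k
  rw [mul_div_assoc', div_le_iff₀ this, mul_comm]
  exact mul_le_mul_of_nonneg_left (hs k) (sq_nonneg _)

/-- The trace of `U⁻¹ ∑ ν(x) v(x) v(x)ᵀ / rad(x)` is `∑ ν(x) rad(x)`, and that matrix is dominated by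
the identity. -/
theorem sum_rad_le {ι : Type*} [Fintype ι] {lam : ℝ} {ν : ι → ℝ}
    {v : ι → EuclideanSpace ℝ (Fin d)} (hs : ∀ k, 0 < s k)
    (h : ∀ w, ∑ k, s k * ⟪e k, w⟫ ^ 2 = lam ^ 2 * ‖w‖ ^ 2 +
        ∑ x, ν x * (⟪w, v x⟫ ^ 2 / rad e s (v x))) :
    ∑ x, ν x * rad e s (v x) ≤ d := by
  have h1 : ∀ k, ∑ x, ν x * (⟪e k, v x⟫ ^ 2 / s k / rad e s (v x)) ≤ 1 := by
    intro k
    have h1 := h (e k)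
    rw [Finset.sum_eq_single k] at h1
    · have hp := hs k
      have : ∑ x, ν x * (⟪e k, v x⟫ ^ 2 / s k / rad e s (v x))
        = (∑ x, ν x * (⟪e k, v x⟫ ^ 2 / rad e s (v x))) / s k := by
        rw [Finset.sum_div]; exact Finset.sum_congr rfl fun x _ => by ring
      rw [this, div_le_one hp]
      simp at h1
      nlinarith [sq_nonneg lam]
    · intro j _ hj
      rw [e.orthonormal.2 hj]; simp
    · simp
  have h2 := Finset.sum_le_sum fun k (_ : k ∈ Finset.univ) => h1 k
  rw [Finset.sum_comm] at h2
  simp at h2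
  refine le_trans (le_of_eq (Finset.sum_congr rfl fun x _ => ?_)) h2
  rw [← Finset.mul_sum, ← Finset.sum_div, ← rad_sq hs, sq, mul_self_div_self]

end

/-! ### The deterministic inequality -/

/-- A weighted least squares minimiser over the unit ball, through its variational inequality. -/
theorem exists_least_squares {d : ℕ} {κ : Type*} [Fintype κ] (a c : κ → ℝ) (ha : ∀ i, 0 ≤ a i)
    (u : κ → EuclideanSpace ℝ (Fin d)) :
    ∃ t : EuclideanSpace ℝ (Fin d), ‖t‖ ≤ 1 ∧ ∀ θ : EuclideanSpace ℝ (Fin d), ‖θ‖ ≤ 1 →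
      ∑ i, a i * ((c i - ⟪t, u i⟫) * ⟪θ - t, u i⟫) ≤ 0 := by
  let J : EuclideanSpace ℝ (Fin d) → ℝ := fun t => ∑ i, a i * (c i - ⟪t, u i⟫) ^ 2
  have hJ : Continuous J := by fun_prop
  obtain ⟨t, ht, hmin⟩ := (isCompact_closedBall (0 : EuclideanSpace ℝ (Fin d)) 1).exists_isMinOn
    ⟨0, by simp⟩ hJ.continuousOn
  refine ⟨t, by simpa using ht, fun θ hθ => ?_⟩
  set A := ∑ i, a i * ((c i - ⟪t, u i⟫) * ⟪θ - t, u i⟫) with hA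
  set B := ∑ i, a i * ⟪θ - t, u i⟫ ^ 2 with hB
  have hB0 : 0 ≤ B := Finset.sum_nonneg fun i _ => mul_nonneg (ha i) (sq_nonneg _)
  have key : ∀ l : ℝ, 0 ≤ l → l ≤ 1 → 0 ≤ -2 * l * A + l ^ 2 * B := by
    intro l hl hl1
    have hmem : t + l • (θ - t) ∈ Metric.closedBall (0 : EuclideanSpace ℝ (Fin d)) 1 :=
      (convex_closedBall _ _).add_smul_sub_mem ht (by simpa using hθ) ⟨hl, hl1⟩
    have h1 : J t ≤ J (t + l • (θ - t)) := hmin hmem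
    have h2 : J (t + l • (θ - t)) = J t + (-2 * l * A + l ^ 2 * B) := by
      simp only [J, hA, hB, Finset.mul_sum, ← Finset.sum_add_distrib]
      refine Finset.sum_congr rfl fun i _ => ?_
      rw [inner_add_left, real_inner_smul_left]
      ring
    linarith
  by_contra hneg
  push Not at hneg
  have hAB : 0 < A + B := by linarith
  have h3 := key (A / (A + B)) (by positivity) ((div_le_one hAB).2 (by linarith))
  have h4 : -2 * (A / (A + B)) * A + (A / (A + B)) ^ 2 * B
      = -(A ^ 2 * (2 * A + B)) / (A + B) ^ 2 := by
    field_simp; ring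
  rw [h4, neg_div] at h3
  have : 0 < A ^ 2 * (2 * A + B) / (A + B) ^ 2 := by positivity
  linarith

/-- The scalar part of `core_ineq`: the self-bounding inequality for `P` is solved, and the terms
linear in `τ` are absorbed by `2 τ ≤ lam + η τ²`. -/
theorem final_arith {d P Q Q' R τ lam η S1 S2 S3 loss N : ℝ} (hη : 0 < η) (hlam : lam = 1 / η)
    (hd : 1 ≤ d) (hP : 0 ≤ P) (hτ : 0 ≤ τ)
    (h1 : Q ≤ S1) (h1' : S1 ≤ 12 * P * τ) (h2 : Q' - Q ≤ S2) (h2' : S2 ≤ 17 * P * τ)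
    (hN : N ≤ 4) (hPP : P ^ 2 = lam ^ 2 * N + Q') (hR : R ≤ d + S3) (hS3 : lam * S3 ≤ 2 * τ)
    (hl : loss ≤ (R / η + η * Q) / 2) : loss ≤ 7 * d / η + 181 * η * τ ^ 2 := by
  have hl0 : 0 < lam := by rw [hlam]; positivity
  have hle : lam * η = 1 := by rw [hlam]; field_simp
  have hPle : P ≤ 29 * τ + 2 * lam := by
    by_contra hc
    push Not at hc
    nlinarith [mul_le_mul_of_nonneg_left hN (sq_nonneg lam), mul_nonneg hτ hl0.le]
  have hQ : Q ≤ 348 * τ ^ 2 + 24 * lam * τ := by nlinarith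
  have hηQ : η * Q ≤ 348 * η * τ ^ 2 + 24 * τ := by
    have := mul_le_mul_of_nonneg_left hQ hη.le
    nlinarith
  have hRη : R / η ≤ d * lam + 2 * τ := by
    rw [div_eq_mul_one_div, ← hlam]
    nlinarith
  have hτ2 : 2 * τ ≤ lam + η * τ ^ 2 := by
    have h : 0 ≤ η * (τ - lam) ^ 2 := by positivity
    have h' : η * (τ - lam) ^ 2 = η * τ ^ 2 - 2 * τ * (lam * η) + (lam * η) * lam := by ring
    rw [h', hle] at h
    linarith
  have hdl : 7 * d / η = 7 * d * lam := by rw [hlam]; ring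
  rw [hdl]
  have : lam ≤ d * lam := by nlinarith
  have : 0 ≤ η * τ ^ 2 := by positivity
  nlinarith

/-- If all three test errors are of order `T`, the `L₁` loss is of order `d / η + η T`. Here `ν` is
the covariate distribution of the model, `ν'` that of the reference, and `m x` the residual of the
reference at `x`. -/
theorem core_ineq {d : ℕ} (hd : 1 ≤ d) {ι : Type*} [Fintype ι]
    {e : OrthonormalBasis (Fin d) ℝ (EuclideanSpace ℝ (Fin d))} {s : Fin d → ℝ}
    {η lam T : ℝ} (hη : 0 < η) (hlam : lam = 1 / η) (hT : 0 ≤ T)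
    {v : ι → EuclideanSpace ℝ (Fin d)} {ν ν' m : ι → ℝ} (hν : ∀ x, 0 ≤ ν x)
    (hs : ∀ k, 0 < s k)
    (h : ∀ w, ∑ k, s k * ⟪e k, w⟫ ^ 2 = lam ^ 2 * ‖w‖ ^ 2 +
        ∑ x, ν' x * (⟪w, v x⟫ ^ 2 / rad e s (v x)))
    {δ : EuclideanSpace ℝ (Fin d)} (hδ : ‖δ‖ ≤ 2)
    (hopt : ∑ x, m x * (⟪δ, v x⟫ / rad e s (v x)) ≤ 0)
    (hI1 : ∫ g, (∑ x, (ν x * ⟪δ, v x⟫ - m x) * Real.sin ⟪g, dir e s (v x)⟫) ^ 2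
      ∂(stdGaussian (EuclideanSpace ℝ (Fin d))) ≤ 48 * T)
    (hI2 : ∫ g, (∑ x, (ν x - ν' x) * kap e s (v x) *
        Real.cos ⟪g, dir e (fun k => √(s k)) (v x)⟫) ^ 2
      ∂(stdGaussian (EuclideanSpace ℝ (Fin d))) ≤ 12 * T)
    (hI3 : (∑ x, (ν x - ν' x) * (lam * rad e s (v x))) ^ 2 ≤ 3 * T) :
    ∑ x, ν x * |⟪δ, v x⟫| ≤ 7 * d / η + 181 * η * T := by
  have hPP0 : 0 ≤ ∑ k, s k * ⟪e k, δ⟫ ^ 2 :=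
    Finset.sum_nonneg fun k _ => mul_nonneg (hs k).le (sq_nonneg _)
  have hexp : Real.exp 1 ≤ 3 := by linarith [Real.exp_one_lt_d9]
  have hexp' : Real.exp 1 ≤ 2.72 := by linarith [Real.exp_one_lt_d9]
  have hτ : √T ^ 2 = T := Real.sq_sqrt hT
  have hPs : √(∑ k, s k * ⟪e k, δ⟫ ^ 2) ^ 2 = ∑ k, s k * ⟪e k, δ⟫ ^ 2 := Real.sq_sqrt hPP0
  have hP0 := Real.sqrt_nonneg (∑ k, s k * ⟪e k, δ⟫ ^ 2)
  have hτ0 := Real.sqrt_nonneg T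
  set P := √(∑ k, s k * ⟪e k, δ⟫ ^ 2) with hP
  have hN : ‖δ‖ ^ 2 ≤ 4 := by nlinarith [norm_nonneg δ]
  have b1 := sign_test_bound (e := e) hs v (fun x => ν x * ⟪δ, v x⟫ - m x) δ
  have b2 := cov_test_bound (e := e) hs v (fun x => ν' x - ν x) δ
  have hI2' : ∫ g, (∑ x, (ν' x - ν x) * kap e s (v x) *
        Real.cos ⟪g, dir e (fun k => √(s k)) (v x)⟫) ^ 2
      ∂(stdGaussian (EuclideanSpace ℝ (Fin d))) ≤ 12 * T := by
    refine le_trans (le_of_eq (integral_congr_ae (.of_forall fun g => ?_))) hI2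
    simp only
    rw [← neg_sq, ← Finset.sum_neg_distrib]
    congr 1
    exact Finset.sum_congr rfl fun x _ => by ring
  rw [← hτ, ]
  refine final_arith (P := P) (Q := ∑ x, ν x * (⟪δ, v x⟫ ^ 2 / rad e s (v x)))
    (Q' := ∑ x, ν' x * (⟪δ, v x⟫ ^ 2 / rad e s (v x))) (R := ∑ x, ν x * rad e s (v x))
    (S1 := ∑ x, (ν x * ⟪δ, v x⟫ - m x) * (⟪δ, v x⟫ / rad e s (v x)))
    (S2 := ∑ x, (ν' x - ν x) * (⟪δ, v x⟫ ^ 2 / rad e s (v x)))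
    (S3 := ∑ x, (ν x - ν' x) * rad e s (v x)) (N := ‖δ‖ ^ 2) (lam := lam)
    hη hlam (by exact_mod_cast hd) hP0 hτ0 ?_ ?_ ?_ ?_ hN (by rw [hPs, h]) ?_ ?_ ?_
  · simp only [sub_mul, Finset.sum_sub_distrib]
    have : ∑ x, ν x * ⟪δ, v x⟫ * (⟪δ, v x⟫ / rad e s (v x))
        = ∑ x, ν x * (⟪δ, v x⟫ ^ 2 / rad e s (v x)) :=
      Finset.sum_congr rfl fun x _ => by ring
    linarith
  · refine (abs_le_of_sq_le_sq' (b1.trans ?_) (by positivity)).2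
    rw [← hPs, mul_pow, hτ, mul_pow]
    have : Real.exp 1 * ∫ g, (∑ x, (ν x * ⟪δ, v x⟫ - m x) * Real.sin ⟪g, dir e s (v x)⟫) ^ 2
      ∂(stdGaussian (EuclideanSpace ℝ (Fin d))) ≤ 3 * (48 * T) :=
      mul_le_mul hexp hI1 (integral_nonneg fun g => sq_nonneg _) (by norm_num)
    have := mul_le_mul_of_nonneg_left this (sq_nonneg P)
    linarith
  · simp only [sub_mul, Finset.sum_sub_distrib, le_refl]
  · refine (abs_le_of_sq_le_sq' (b2.trans ?_) (by positivity)).2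
    rw [← hPs, mul_pow, hτ, mul_pow]
    have : 2 * Real.exp 1 * ∫ g, (∑ x, (ν' x - ν x) * kap e s (v x) *
        Real.cos ⟪g, dir e (fun k => √(s k)) (v x)⟫) ^ 2
      ∂(stdGaussian (EuclideanSpace ℝ (Fin d))) ≤ (2 * 2.72) * (12 * T) :=
      mul_le_mul (by linarith) hI2' (integral_nonneg fun g => sq_nonneg _) (by norm_num)
    have h5 := mul_le_mul_of_nonneg_left this (mul_nonneg (sq_nonneg P) (sq_nonneg ‖δ‖))
    have h6 : P ^ 2 * ‖δ‖ ^ 2 * (2 * 2.72 * (12 * T)) ≤ P ^ 2 * 4 * (2 * 2.72 * (12 * T)) := by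
      gcongr
    have : 0 ≤ P ^ 2 * T := by positivity
    linarith
  · have := sum_rad_le hs h
    simp only [sub_mul, Finset.sum_sub_distrib]
    linarith
  · refine (abs_le_of_sq_le_sq' (le_trans (le_of_eq ?_) (hI3.trans ?_)) (by positivity)).2
    · rw [Finset.mul_sum]
      congr 1
      exact Finset.sum_congr rfl fun x _ => by ring
    · rw [mul_pow, hτ]; linarith
  · rw [Finset.sum_div, Finset.mul_sum, ← Finset.sum_add_distrib, Finset.sum_div]
    refine Finset.sum_le_sum fun x _ => ?_
    rcases eq_or_ne (v x) 0 with h0 | h0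
    · simp [h0, rad_zero]
    have hr := rad_pos (e := e) hs h0
    have : |⟪δ, v x⟫| ≤ (rad e s (v x) / η + η * (⟪δ, v x⟫ ^ 2 / rad e s (v x))) / 2 := by
      rw [← sq_abs]
      have h7 : 0 ≤ (rad e s (v x) - η * |⟪δ, v x⟫|) ^ 2 / (η * rad e s (v x)) := by positivity
      have h8 : (rad e s (v x) - η * |⟪δ, v x⟫|) ^ 2 / (η * rad e s (v x)) =
        (rad e s (v x) / η + η * (|⟪δ, v x⟫| ^ 2 / rad e s (v x))) - 2 * |⟪δ, v x⟫| := by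
        field_simp
        ring
      linarith
    refine (mul_le_mul_of_nonneg_left this (hν x)).trans (le_of_eq ?_)
    ring

/-! ### Linear models and test distributions -/

theorem abs_inner_le_one {d : ℕ} {θ x : EuclideanSpace ℝ (Fin d)} (hθ : ‖θ‖ ≤ 1) (hx : ‖x‖ ≤ 1) :
    |⟪θ, x⟫| ≤ 1 :=
  (abs_real_inner_le_norm θ x).trans (mul_le_one₀ hθ (norm_nonneg _) hx)

section
variable {d : ℕ} {X : Finset (EuclideanSpace ℝ (Fin d))}

theorem integral_linModel (hX : ∀ x ∈ X, ‖x‖ ≤ 1) (ν : Measure {x // x ∈ X})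
    [IsProbabilityMeasure ν] {θ : EuclideanSpace ℝ (Fin d)} (hθ : ‖θ‖ ≤ 1)
    (f : {x // x ∈ X} × Bool → ℝ) :
    ∫ z, f z ∂(linModel X ν θ) = ∑ x : {x // x ∈ X}, (ν {x}).toReal *
      ((1 + ⟪θ, (x : EuclideanSpace ℝ (Fin d))⟫) / 2 * f (x, true) +
        (1 - ⟪θ, (x : EuclideanSpace ℝ (Fin d))⟫) / 2 * f (x, false)) := by
  have hd : ∀ (c : ℝ) (z : {x // x ∈ X} × Bool),
      Integrable f (ENNReal.ofReal c • Measure.dirac z) := fun c z =>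
    (integrable_dirac (by finiteness)).smul_measure ENNReal.ofReal_ne_top
  rw [linModel, integral_finsetSum_measure]
  · refine Finset.sum_congr rfl fun x _ => ?_
    have h := abs_le.1 (abs_inner_le_one hθ (hX x.1 x.2))
    rw [integral_smul_measure, integral_add_measure (hd _ _) (hd _ _), integral_smul_measure,
      integral_smul_measure, integral_dirac, integral_dirac,
      ENNReal.toReal_ofReal (by linarith), ENNReal.toReal_ofReal (by linarith)]
    simp only [smul_eq_mul]
  · intro x _
    exact ((hd _ _).add_measure (hd _ _)).smul_measure (measure_ne_top _ _)

theorem isProbabilityMeasure_linModel (hX : ∀ x ∈ X, ‖x‖ ≤ 1) (ν : Measure {x // x ∈ X})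
    [IsProbabilityMeasure ν] {θ : EuclideanSpace ℝ (Fin d)} (hθ : ‖θ‖ ≤ 1) :
    IsProbabilityMeasure (linModel X ν θ) := by
  refine ⟨?_⟩
  rw [linModel, Measure.finsetSum_apply]
  have : ∀ x : {x // x ∈ X}, (ν {x} •
    (ENNReal.ofReal ((1 + ⟪θ, (x : EuclideanSpace ℝ (Fin d))⟫) / 2) •
        Measure.dirac (x, true) +
      ENNReal.ofReal ((1 - ⟪θ, (x : EuclideanSpace ℝ (Fin d))⟫) / 2) •
        Measure.dirac (x, false))) Set.univ = ν {x} := by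
    intro x
    have h := abs_le.1 (abs_inner_le_one hθ (hX x.1 x.2))
    simp only [Measure.smul_apply, Measure.add_apply, measure_univ, smul_eq_mul, mul_one]
    rw [← ENNReal.ofReal_add (by linarith) (by linarith), ← add_div]
    norm_num
  simp_rw [this]
  simp

theorem isProbabilityMeasure_of_mem_coLin (hX : ∀ x ∈ X, ‖x‖ ≤ 1)
    {Mb : Measure ({x // x ∈ X} × Bool)} (h : Mb ∈ coLin X) : IsProbabilityMeasure Mb := by
  obtain ⟨n, w, ν, θ, hw, hw1, hν, hθ, rfl⟩ := h
  refine ⟨?_⟩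
  rw [Measure.finsetSum_apply]
  have : ∀ k, (ENNReal.ofReal (w k) • linModel X (ν k) (θ k)) Set.univ = ENNReal.ofReal (w k) := by
    intro k
    have := hν k
    have := isProbabilityMeasure_linModel hX (ν k) (hθ k)
    simp
  simp_rw [this]
  rw [← ENNReal.ofReal_sum_of_nonneg fun k _ => hw k, hw1, ENNReal.ofReal_one]

end

section
variable {Z : Type*} [Fintype Z] [MeasurableSpace Z] [MeasurableSingletonClass Z]

theorem Dl_eq (ℓ : Z → ℝ) (P Q : Measure Z) [IsFiniteMeasure P] [IsFiniteMeasure Q] :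
    Dl ℓ P Q = |∑ z, P.real {z} * ℓ z - ∑ z, Q.real {z} * ℓ z| := by
  rw [Dl, integral_fintype .of_finite, integral_fintype .of_finite]
  rfl

theorem Dl_sq_le_one {ℓ : Z → ℝ} (hℓ : ∀ z, ℓ z ∈ Set.Icc (0 : ℝ) 1) (P Q : Measure Z)
    [IsProbabilityMeasure P] [IsProbabilityMeasure Q] : Dl ℓ P Q ^ 2 ≤ 1 := by
  have h : ∀ (ρ : Measure Z) [IsProbabilityMeasure ρ], 0 ≤ (∫ z, ℓ z ∂ρ) ∧ (∫ z, ℓ z ∂ρ) ≤ 1 := by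
    intro ρ _
    refine ⟨integral_nonneg fun z => (hℓ z).1, ?_⟩
    refine (integral_mono .of_finite (integrable_const 1) fun z => (hℓ z).2).trans ?_
    simp
  rw [Dl, sq_abs, sq_le_one_iff_abs_le_one, abs_le]
  constructor <;> linarith [(h P).1, (h P).2, (h Q).1, (h Q).2]

/-- The distribution over tests that draws `g ∼ μ` and plays each of `f 0 g`, `f 1 g`, `f 2 g` with
probability `1/3`. -/
theorem exists_testDist {Θ Ω : Type*} [MeasurableSpace Θ] [MeasurableSpace Ω] (μ : Measure Ω)
    [IsProbabilityMeasure μ] (t : Θ) (f : Fin 3 → Ω → Z → ℝ) (hf : ∀ j, Measurable (f j))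
    (hb : ∀ j g z, f j g z ∈ Set.Icc (0 : ℝ) 1) :
    ∃ q : Measure (Θ × (Z → ℝ)), IsTestDist q ∧
      ∀ P Q : Measure Z, IsProbabilityMeasure P → IsProbabilityMeasure Q →
        ∫ pl, Dl pl.2 P Q ^ 2 ∂q = (∑ j, ∫ g, Dl (f j g) P Q ^ 2 ∂μ) / 3 := by
  have hF : ∀ j, Measurable fun g => (t, f j g) := fun j => measurable_const.prodMk (hf j)
  have hprob : ∀ j, IsProbabilityMeasure (μ.map fun g => (t, f j g)) := fun j =>
    Measure.isProbabilityMeasure_map (hF j).aemeasurable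
  have h3 : (3 : ℝ≥0∞)⁻¹ * 3 = 1 := ENNReal.inv_mul_cancel (by norm_num) (by norm_num)
  refine ⟨(3 : ℝ≥0∞)⁻¹ • ∑ j, μ.map fun g => (t, f j g), ⟨⟨?_⟩, ?_⟩, ?_⟩
  · rw [Measure.smul_apply, Measure.finsetSum_apply]
    simp [h3]
  · have hS : MeasurableSet {pl : Θ × (Z → ℝ) | ∀ z, pl.2 z ∈ Set.Icc (0 : ℝ) 1} := by
      have : {pl : Θ × (Z → ℝ) | ∀ z, pl.2 z ∈ Set.Icc (0 : ℝ) 1} =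
          ⋂ z, (fun pl : Θ × (Z → ℝ) => pl.2 z) ⁻¹' Set.Icc (0 : ℝ) 1 := by
        ext; simp
      rw [this]
      exact MeasurableSet.iInter fun z => measurableSet_Icc.preimage (by fun_prop)
    have hS' : {pl : Θ × (Z → ℝ) | Measurable pl.2 ∧ ∀ z, pl.2 z ∈ Set.Icc (0 : ℝ) 1} =
        {pl : Θ × (Z → ℝ) | ∀ z, pl.2 z ∈ Set.Icc (0 : ℝ) 1} := by
      ext pl
      exact ⟨fun h => h.2, fun h => ⟨measurable_of_finite _, h⟩⟩
    have hj : ∀ j, (μ.map fun g => (t, f j g))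
        {pl : Θ × (Z → ℝ) | ∀ z, pl.2 z ∈ Set.Icc (0 : ℝ) 1} = 1 := by
      intro j
      rw [Measure.map_apply (hF j) hS]
      have : (fun g => (t, f j g)) ⁻¹' {pl : Θ × (Z → ℝ) | ∀ z, pl.2 z ∈ Set.Icc (0 : ℝ) 1}
          = Set.univ := Set.eq_univ_of_forall fun g => hb j g
      rw [this, measure_univ]
    rw [hS', Measure.smul_apply, Measure.finsetSum_apply]
    simp_rw [hj]
    simp [h3]
  · intro P Q hP hQ
    have hm : Measurable fun pl : Θ × (Z → ℝ) => Dl pl.2 P Q ^ 2 := by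
      simp_rw [Dl_eq, sq_abs]
      fun_prop
    have hint : ∀ j, Integrable (fun pl : Θ × (Z → ℝ) => Dl pl.2 P Q ^ 2)
        (μ.map fun g => (t, f j g)) := by
      intro j
      rw [integrable_map_measure hm.aestronglyMeasurable (hF j).aemeasurable]
      refine Integrable.of_bound (hm.comp (hF j)).aestronglyMeasurable 1 (.of_forall fun g => ?_)
      simp only [Function.comp, Real.norm_eq_abs, abs_pow, sq_abs]
      exact Dl_sq_le_one (hb j g) P Q
    rw [integral_smul_measure, integral_finsetSum_measure fun j _ => hint j]
    simp_rw [fun j => integral_map (hF j).aemeasurable (hint j).aestronglyMeasurable]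
    simp
    ring

end

/-! ### The strategy -/

/-- The label in `{-1, 1}` encoded by a Boolean. -/
def sgn (y : Bool) : ℝ := if y then 1 else -1

/-- The offset bound, for a deterministic decision `t`. -/
theorem exists_strategy {d : ℕ} (hd : 1 ≤ d) {X : Finset (EuclideanSpace ℝ (Fin d))}
    (hX : ∀ x ∈ X, ‖x‖ ≤ 1) {γ : ℝ} (hγ : 0 < γ) (Mb : Measure ({x // x ∈ X} × Bool))
    [IsProbabilityMeasure Mb] :
    ∃ (t : {θ : EuclideanSpace ℝ (Fin d) // ‖θ‖ ≤ 1})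
      (q : Measure ({θ : EuclideanSpace ℝ (Fin d) // ‖θ‖ ≤ 1} × ({x // x ∈ X} × Bool → ℝ))),
      IsTestDist q ∧ ∀ i, linLossL1 X i t ≤
        1267 * d / γ + γ * testErr (linMs X) (fun _ => Mb) q i := by
  set η : ℝ := γ / 181 with hηdef
  have hη : 0 < η := by positivity
  set lam : ℝ := 1 / η with hlam
  have hlam0 : 0 < lam := by positivity
  let v : {x // x ∈ X} → EuclideanSpace ℝ (Fin d) := fun x => x.1
  have hv : ∀ x, ‖v x‖ ≤ 1 := fun x => hX x.1 x.2
  let ν' : {x // x ∈ X} → ℝ := fun x => ∑ y, Mb.real {(x, y)}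
  obtain ⟨e, s, hs1, hinfo⟩ := exists_info (ν := ν') v hlam0
    (fun x => Finset.sum_nonneg fun y _ => measureReal_nonneg)
  have hs : ∀ k, 0 < s k := fun k => lt_of_lt_of_le (by positivity) (hs1 k)
  obtain ⟨t, ht, hopt⟩ := exists_least_squares (κ := {x // x ∈ X} × Bool)
    (fun z => Mb.real {z} / rad e s (v z.1)) (fun z => sgn z.2)
    (fun z => div_nonneg measureReal_nonneg (rad_nonneg _)) (fun z => v z.1)
  let m : {x // x ∈ X} → ℝ := fun x => ∑ y, Mb.real {(x, y)} * (sgn y - ⟪t, v x⟫)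
  let f : Fin 3 → EuclideanSpace ℝ (Fin d) → {x // x ∈ X} × Bool → ℝ :=
    ![fun g z => 1 / 2 + (sgn z.2 - ⟪t, v z.1⟫) * Real.sin ⟪g, dir e s (v z.1)⟫ / 4,
      fun g z => 1 / 2 + kap e s (v z.1) * Real.cos ⟪g, dir e (fun k => √(s k)) (v z.1)⟫ / 2,
      fun _ z => lam * rad e s (v z.1)]
  have hf : ∀ j, Measurable (f j) := by
    intro j
    refine measurable_pi_iff.2 fun z => Continuous.measurable ?_
    fin_cases j <;> simp [f] <;> fun_prop
  have hb : ∀ j g z, f j g z ∈ Set.Icc (0 : ℝ) 1 := by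
    intro j g z
    have h1 := abs_le.1 (abs_inner_le_one ht (hv z.1))
    fin_cases j
    · simp only [f, Fin.zero_eta, Matrix.cons_val_zero, Set.mem_Icc]
      have h2 : |(sgn z.2 - ⟪t, v z.1⟫) * Real.sin ⟪g, dir e s (v z.1)⟫| ≤ 2 * 1 := by
        rw [abs_mul]
        refine mul_le_mul ?_ (Real.abs_sin_le_one _) (abs_nonneg _) (by norm_num)
        rw [abs_le]
        rcases z.2 with _ | _ <;> simp only [sgn] <;> constructor <;> norm_num <;> linarith
      have h3 := abs_le.1 h2
      constructor <;> linarith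
    · simp only [f, Fin.mk_one, Matrix.cons_val_one, Matrix.cons_val_zero, Set.mem_Icc]
      have h2 : |kap e s (v z.1) * Real.cos ⟪g, dir e (fun k => √(s k)) (v z.1)⟫| ≤ 1 * 1 := by
        rw [abs_mul, abs_of_nonneg (kap_nonneg _)]
        exact mul_le_mul ((kap_le hs _).trans (hv _)) (Real.abs_cos_le_one _) (abs_nonneg _)
          (by norm_num)
      have h3 := abs_le.1 h2
      constructor <;> linarith
    · simp only [f, Fin.reduceFinMk, Matrix.cons_val, Set.mem_Icc]
      exact ⟨mul_nonneg hlam0.le (rad_nonneg _), (lam_rad_le hlam0 hs1 _).trans (hv _)⟩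
  obtain ⟨q, hq, hqe⟩ := exists_testDist (stdGaussian (EuclideanSpace ℝ (Fin d)))
    (⟨t, ht⟩ : {θ : EuclideanSpace ℝ (Fin d) // ‖θ‖ ≤ 1}) f hf hb
  refine ⟨⟨t, ht⟩, q, hq, ?_⟩
  rintro ⟨⟨ν, hν⟩, ⟨θ, hθ⟩⟩
  have hprob := isProbabilityMeasure_linModel hX ν hθ
  have hT := hqe (linModel X ν θ) Mb hprob inferInstance
  set T := ∫ pl, Dl pl.2 (linModel X ν θ) Mb ^ 2 ∂q with hTdef
  have hTe : testErr (linMs X) (fun _ => Mb) q (⟨ν, hν⟩, ⟨θ, hθ⟩) = T := rfl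
  rw [hTe]
  have hT0 : 0 ≤ T := integral_nonneg fun _ => sq_nonneg _
  set δ := θ - t with hδ
  have hνreal : ∑ x : {x // x ∈ X}, (ν {x}).toReal = 1 := by
    have := integral_fintype (μ := ν) (f := fun _ => (1 : ℝ)) .of_finite
    simpa [Measure.real] using this.symm
  have hMb : ∀ F : {x // x ∈ X} × Bool → ℝ,
      ∫ z, F z ∂Mb = ∑ x, ∑ y, Mb.real {(x, y)} * F (x, y) := by
    intro F
    rw [integral_fintype .of_finite, Fintype.sum_prod_type]
    rfl
  have hν' : ∑ x, ν' x = 1 := by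
    have := hMb fun _ => 1
    simpa [ν'] using this.symm
  have D0 : ∀ g, Dl (f 0 g) (linModel X ν θ) Mb ^ 2 =
      (∑ x, ((ν {x}).toReal * ⟪δ, v x⟫ - m x) * Real.sin ⟪g, dir e s (v x)⟫) ^ 2 / 16 := by
    intro g
    rw [Dl, sq_abs, integral_linModel hX ν hθ, hMb]
    have h1 : ∑ x : {x // x ∈ X}, (ν {x}).toReal * ((1 + ⟪θ, x.1⟫) / 2 * f 0 g (x, true) +
        (1 - ⟪θ, x.1⟫) / 2 * f 0 g (x, false)) =
        1 / 2 * ∑ x : {x // x ∈ X}, (ν {x}).toReal +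
        (∑ x, (ν {x}).toReal * ⟪δ, v x⟫ * Real.sin ⟪g, dir e s (v x)⟫) / 4 := by
      rw [Finset.mul_sum, Finset.sum_div, ← Finset.sum_add_distrib]
      refine Finset.sum_congr rfl fun x _ => ?_
      simp only [f, Matrix.cons_val_zero, hδ, inner_sub_left, sgn, v]
      simp
      ring
    have h2 : ∑ x, ∑ y, Mb.real {(x, y)} * f 0 g (x, y) = 1 / 2 * ∑ x, ν' x +
        (∑ x, m x * Real.sin ⟪g, dir e s (v x)⟫) / 4 := by
      rw [Finset.mul_sum, Finset.sum_div, ← Finset.sum_add_distrib]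
      refine Finset.sum_congr rfl fun x _ => ?_
      simp only [f, Matrix.cons_val_zero, sgn, v, m, ν', Fintype.sum_bool]
      ring
    rw [h1, h2, hνreal, hν']
    simp only [sub_mul, Finset.sum_sub_distrib]
    ring
  have D1 : ∀ g, Dl (f 1 g) (linModel X ν θ) Mb ^ 2 =
      (∑ x, ((ν {x}).toReal - ν' x) * kap e s (v x) *
        Real.cos ⟪g, dir e (fun k => √(s k)) (v x)⟫) ^ 2 / 4 := by
    intro g
    rw [Dl, sq_abs, integral_linModel hX ν hθ, hMb]
    have h1 : ∑ x : {x // x ∈ X}, (ν {x}).toReal * ((1 + ⟪θ, x.1⟫) / 2 * f 1 g (x, true) +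
        (1 - ⟪θ, x.1⟫) / 2 * f 1 g (x, false)) =
        1 / 2 * ∑ x : {x // x ∈ X}, (ν {x}).toReal +
        (∑ x, (ν {x}).toReal * kap e s (v x) *
          Real.cos ⟪g, dir e (fun k => √(s k)) (v x)⟫) / 2 := by
      rw [Finset.mul_sum, Finset.sum_div, ← Finset.sum_add_distrib]
      refine Finset.sum_congr rfl fun x _ => ?_
      simp only [f, Matrix.cons_val_one, Matrix.cons_val_zero, v]
      ring
    have h2 : ∑ x, ∑ y, Mb.real {(x, y)} * f 1 g (x, y) = 1 / 2 * ∑ x, ν' x +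
        (∑ x, ν' x * kap e s (v x) * Real.cos ⟪g, dir e (fun k => √(s k)) (v x)⟫) / 2 := by
      rw [Finset.mul_sum, Finset.sum_div, ← Finset.sum_add_distrib]
      refine Finset.sum_congr rfl fun x _ => ?_
      simp only [f, Matrix.cons_val_one, Matrix.cons_val_zero, v, ν', Fintype.sum_bool]
      ring
    rw [h1, h2, hνreal, hν']
    simp only [sub_mul, Finset.sum_sub_distrib]
    ring
  have D2 : ∀ g, Dl (f 2 g) (linModel X ν θ) Mb ^ 2 =
      (∑ x, ((ν {x}).toReal - ν' x) * (lam * rad e s (v x))) ^ 2 := by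
    intro g
    rw [Dl, sq_abs, integral_linModel hX ν hθ, hMb, ← Finset.sum_sub_distrib]
    congr 1
    refine Finset.sum_congr rfl fun x _ => ?_
    simp only [f, Matrix.cons_val, v, ν', Fintype.sum_bool]
    ring
  simp_rw [Fin.sum_univ_three, D0, D1, D2, integral_div] at hT
  simp only [integral_const, probReal_univ, one_smul] at hT
  have n0 : 0 ≤ ∫ g, (∑ x, ((ν {x}).toReal * ⟪δ, v x⟫ - m x) *
      Real.sin ⟪g, dir e s (v x)⟫) ^ 2 ∂(stdGaussian (EuclideanSpace ℝ (Fin d))) :=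
    integral_nonneg fun _ => sq_nonneg _
  have n1 : 0 ≤ ∫ g, (∑ x, ((ν {x}).toReal - ν' x) * kap e s (v x) *
        Real.cos ⟪g, dir e (fun k => √(s k)) (v x)⟫) ^ 2
        ∂(stdGaussian (EuclideanSpace ℝ (Fin d))) :=
    integral_nonneg fun _ => sq_nonneg _
  have n2 := sq_nonneg (∑ x, ((ν {x}).toReal - ν' x) * (lam * rad e s (v x)))
  have key := core_ineq hd (ν := fun x => (ν {x}).toReal) (ν' := ν') (m := m) (v := v)
    (δ := δ) hη hlam hT0 (fun x => ENNReal.toReal_nonneg) hs hinfo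
    ((norm_sub_le _ _).trans (by linarith)) ?_ (by linarith) (by linarith) (by linarith)
  · have hl : linLossL1 X (⟨ν, hν⟩, ⟨θ, hθ⟩) ⟨t, ht⟩ = ∑ x, (ν {x}).toReal * |⟪δ, v x⟫| := by
      rw [linLossL1]
      refine Finset.sum_congr rfl fun x _ => ?_
      rw [real_inner_comm, ← abs_neg, ← inner_neg_left, neg_sub]
    rw [hl]
    refine key.trans (le_of_eq ?_)
    rw [hηdef]
    field_simp
    ring
  · refine le_trans (le_of_eq ?_) (hopt θ hθ)
    rw [Fintype.sum_prod_type]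
    refine Finset.sum_congr rfl fun x _ => ?_
    simp only [m, Finset.sum_mul]
    exact Finset.sum_congr rfl fun y _ => by ring

/-- **Private DEC upper bound for linear regression under `L₁` estimation error.** There
is a universal constant `C` such that for every `d ≥ 1` and every finite subset `X` of the
closed unit ball of `ℝ^d`: (i) for every `γ > 0` and every probability distribution `M̄` on
`X × {−1,1}`, `p-dec^{o,LDP}_γ(M_Lin, M̄) ≤ C d / γ`; consequently (ii) for every `ε > 0`,
`p-dec^{LDP}_ε(M_Lin) ≤ 2 √(C d) ε` (reference models ranging over `co(M_Lin)`). -/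
theorem linear_regression_pdec_upper :
    ∃ C : ℝ, 0 < C ∧ ∀ d : ℕ, 1 ≤ d → ∀ X : Finset (EuclideanSpace ℝ (Fin d)),
      (∀ x ∈ X, ‖x‖ ≤ 1) →
      (∀ γ : ℝ, 0 < γ → ∀ Mb : Measure ({x // x ∈ X} × Bool), IsProbabilityMeasure Mb →
        pdecOffLDP (linMs X) (linLossL1 X) (fun _ => Mb) γ ≤ ((C * d / γ : ℝ) : EReal)) ∧
      ∀ ε : ℝ, 0 < ε →
        (⨆ Mb : coLin X, pdecLDP (linMs X) (linLossL1 X) (fun _ => Mb.1) ε) ≤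
          ((2 * Real.sqrt (C * d) * ε : ℝ) : EReal) := by
  refine ⟨1267, by norm_num, fun d hd X hX => ⟨fun γ hγ Mb hMb => ?_, fun ε hε => ?_⟩⟩
  · obtain ⟨t, q, hq, h⟩ := exists_strategy hd hX hγ Mb
    refine iInf₂_le_of_le ⟨Measure.dirac t, inferInstance⟩ ⟨q, hq⟩ (iSup_le fun i => ?_)
    rw [EReal.coe_le_coe_iff, integral_dirac]
    linarith [h i]
  · refine iSup_le fun ⟨Mb, hMbmem⟩ => ?_
    have := isProbabilityMeasure_of_mem_coLin hX hMbmem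
    have hdpos : (0 : ℝ) < 1267 * d := by
      have : (1 : ℝ) ≤ d := by exact_mod_cast hd
      linarith
    have hr := Real.sqrt_pos.2 hdpos
    have hr2 := Real.mul_self_sqrt hdpos.le
    -- this `γ` balances the two terms `C d / γ` and `γ ε²`
    have hγ : 0 < √(1267 * d) / ε := by positivity
    obtain ⟨t, q, hq, h⟩ := exists_strategy hd hX hγ Mb
    refine iInf₂_le_of_le ⟨Measure.dirac t, inferInstance⟩ ⟨q, hq⟩ (sSup_le ?_)
    rintro _ ⟨i, hi, rfl⟩
    rw [EReal.coe_le_coe_iff, integral_dirac]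
    refine (h i).trans ((add_le_add_right (mul_le_mul_of_nonneg_left hi hγ.le) _).trans
      (le_of_eq ?_))
    nth_rw 1 [← hr2]
    field_simp
    ring
end

section
/- Fractional covering number lower bound for interactive locally private learning: Let Z, O, Π be measurable spaces, let M be a class of models, each model M assigning to every π ∈ Π a probability measure M(π) on Z, and let L : M × Π → ℝ be a loss with each set {π : L(M,π) ≤ Δ} measurable. Let T ≥ 1, α > 0, Δ ≥ 0. Consider any T-round α-LDP algorithm: at each round t = 1,…,T it selects (possibly at random, measurably in the past transcript (π¹,o¹,…,π^{t−1},o^{t−1})) a decision π^t ∈ Π and an α-DP channel Q^t from Z to O; a latent sample z^t ∼ M(π^t) is drawn and the algorithm observes o^t ∼ Q^t(·|z^t); after round T it outputs π_{T+1} ∈ Π measurably in the transcript, and P^{M,Alg} denotes the resulting law. Suppose that for every M ∈ M: P^{M,Alg}( L(M, π_{T+1}) ≤ Δ ) ≥ 1/2. Then T ≥ ( log DC_Δ(M) − 2 ) / ( 2·(e^α − 1)² ). -/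
/-!
Fix any model `M₀` of the class and let `p` be the law of the algorithm's output under `M₀`.
At each round, privacy keeps the likelihood ratio of the observation laws under a model `M` and
under `M₀` within `[e^{-α}, e^α]` (`LDPAlg.obs_dp`), so their `χ²`-divergence is at most
`(e^α - 1)²`.  By Cauchy–Schwarz, every `[0, 1]`-valued `f` of the observation satisfies
`(E_M f)² ≤ (1 + (e^α - 1)²) E_{M₀} f²` (`sq_lintegral_le_of_ratio`).  This form of the bound
composes over rounds without any density of transcript laws: the conditional expectation of `f`
given the past is again `[0, 1]`-valued (`LDPAlg.sq_lintegral_histLaw_le`).  Averaging over the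
seed by Jensen gives `P_M(A)² ≤ (1 + (e^α - 1)²)^T p(A)` for every output event `A`
(`LDPAlg.sq_outLaw_le`).  Taking `A` to be the success event of `M`, which has
`P_M`-probability at least `1/2`, yields `1 / p(A) ≤ 4 (1 + (e^α - 1)²)^T ≤ e^{2 + T (e^α - 1)²}`,
and `p` witnesses the bound on the infimum defining the fractional covering number.
-/

/-- A `T`-round interactive `α`-LDP algorithm.  Its internal randomness is modelled by a
random seed drawn once from a probability space `(R, seed)` (any randomized algorithm is
such a mixture of deterministic ones).  At round `t`, given the seed and the past
transcript `(π¹,o¹,…,π^{t−1},o^{t−1})`, it selects (measurably) a decision `dec t` and an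
`α`-DP Markov channel `chan t` from `Z` to `O`; after `T` rounds it outputs a decision
measurably in the transcript. -/
structure LDPAlg.{u', v', w', r'} (Z : Type u') (O : Type v') (Θ : Type w')
    [MeasurableSpace Z] [MeasurableSpace O] [MeasurableSpace Θ] (T : ℕ) (α : ℝ) :
    Type (max u' v' w' (r' + 1)) where
  R : Type r'
  [mR : MeasurableSpace R]
  seed : MeasureTheory.Measure R
  seedProb : MeasureTheory.IsProbabilityMeasure seed
  dec : (t : ℕ) → R × (Fin t → Θ × O) → Θ
  chan : (t : ℕ) → R × (Fin t → Θ × O) → ProbabilityTheory.Kernel Z O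
  out : R × (Fin T → Θ × O) → Θ
  dec_meas : ∀ t, Measurable (dec t)
  out_meas : Measurable out
  chan_markov : ∀ t rh, ProbabilityTheory.IsMarkovKernel (chan t rh)
  chan_meas : ∀ t, ∀ E : Set O, MeasurableSet E →
      Measurable fun p : (R × (Fin t → Θ × O)) × Z => chan t p.1 p.2 E
  chan_dp : ∀ t rh, ∀ z z' : Z, ∀ E : Set O, MeasurableSet E →
      chan t rh z E ≤ ENNReal.ofReal (Real.exp α) * chan t rh z' E

open MeasureTheory ProbabilityTheory
open scoped ENNReal

instance {Z O Θ : Type*} [MeasurableSpace Z] [MeasurableSpace O] [MeasurableSpace Θ]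
    {T : ℕ} {α : ℝ} (alg : LDPAlg Z O Θ T α) : MeasurableSpace alg.R := alg.mR

/-- The law of the transcript after `t` rounds of interaction between the algorithm `alg`
(with seed `r`) and the (stationary) environment given by the model `M : Θ → Δ(Z)`: at
round `t`, a latent sample `z^t ∼ M(π^t)` is drawn and the algorithm observes
`o^t ∼ (chan t)(·|z^t)`. -/
noncomputable def LDPAlg.histLaw {Z O Θ : Type*} [MeasurableSpace Z] [MeasurableSpace O]
    [MeasurableSpace Θ] {T : ℕ} {α : ℝ} (alg : LDPAlg Z O Θ T α)
    (M : Θ → Measure Z) (r : alg.R) : (t : ℕ) → Measure (Fin t → Θ × O)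
  | 0 => Measure.dirac fun i => i.elim0
  | t + 1 =>
      (alg.histLaw M r t).bind fun h =>
        (((M (alg.dec t (r, h))).bind fun z => alg.chan t (r, h) z).map
          fun o => Fin.snoc h (alg.dec t (r, h), o))

/-- The law `P^{M,Alg}` of the output decision `π_{T+1}` of the algorithm `alg` under the
model `M`. -/
noncomputable def LDPAlg.outLaw {Z O Θ : Type*} [MeasurableSpace Z] [MeasurableSpace O]
    [MeasurableSpace Θ] {T : ℕ} {α : ℝ} (alg : LDPAlg Z O Θ T α)
    (M : Θ → Measure Z) : Measure Θ :=
  alg.seed.bind fun r => (alg.histLaw M r T).map fun h => alg.out (r, h)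

/-- The fractional covering number
`DC_Δ(M) := inf_{p ∈ Δ(Θ)} sup_{M ∈ M} 1 / p({π : L(M,π) ≤ Δ})` of a model class indexed
by `ι` with loss `loss`. -/
noncomputable def fracCovDC {Θ ι : Type*} [MeasurableSpace Θ]
    (loss : ι → Θ → ℝ) (Δ : ℝ) : ℝ≥0∞ :=
  ⨅ p : {p : Measure Θ // IsProbabilityMeasure p},
    ⨆ i : ι, (p.1 {π | loss i π ≤ Δ})⁻¹

/-! ### A `χ²` inequality for measures with bounded likelihood ratio -/

/-- One round of the change of measure.  For probability measures with likelihood ratios in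
`[(1 + ε)⁻¹, 1 + ε]`, the `χ²`-divergence is at most `ε²`; the conclusion is the resulting
Cauchy–Schwarz inequality for `[0, 1]`-valued functions.  For `ε = 0` it is Jensen's inequality. -/
lemma sq_lintegral_le_of_ratio {X : Type*} [MeasurableSpace X] {μ ν : Measure X}
    [IsProbabilityMeasure μ] [IsProbabilityMeasure ν] {ε : ℝ} (hε : 0 ≤ ε)
    (h1 : ∀ E, MeasurableSet E → μ E ≤ ENNReal.ofReal (1 + ε) * ν E)
    (h2 : ∀ E, MeasurableSet E → ν E ≤ ENNReal.ofReal (1 + ε) * μ E)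
    {f : X → ℝ≥0∞} (hf : Measurable f) (hf1 : ∀ x, f x ≤ 1) :
    (∫⁻ x, f x ∂μ) ^ 2 ≤ ENNReal.ofReal (1 + ε ^ 2) * ∫⁻ x, f x ^ 2 ∂ν := by
  set F : X → ℝ := fun x => (f x).toReal with hF
  have hFm : Measurable F := hf.ennreal_toReal
  have hF0 : ∀ x, 0 ≤ F x := fun x => ENNReal.toReal_nonneg
  have hF1 : ∀ x, F x ≤ 1 := fun x => by
    simpa using ENNReal.toReal_mono ENNReal.one_ne_top (hf1 x)
  have hfF : ∀ x, f x = ENNReal.ofReal (F x) := fun x =>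
    (ENNReal.ofReal_toReal (ne_top_of_le_ne_top ENNReal.one_ne_top (hf1 x))).symm
  have hbd : ∀ (ρ : Measure X) [IsProbabilityMeasure ρ] (g : X → ℝ) (C : ℝ), Measurable g →
      (∀ x, |g x| ≤ C) → Integrable g ρ := fun ρ _ g C hg hC =>
    Integrable.of_bound hg.aestronglyMeasurable C (ae_of_all _ hC)
  have hFμ : Integrable F μ := hbd μ F 1 hFm fun x => by
    rw [abs_of_nonneg (hF0 x)]; exact hF1 x
  have hFν : Integrable F ν := hbd ν F 1 hFm fun x => by
    rw [abs_of_nonneg (hF0 x)]; exact hF1 x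
  have hF2ν : Integrable (fun x => F x ^ 2) ν := hbd ν _ 1 (hFm.pow_const 2) fun x => by
    rw [abs_of_nonneg (sq_nonneg _)]; exact pow_le_one₀ (hF0 x) (hF1 x)
  have key : ∀ (ρ σ : Measure X) [IsProbabilityMeasure ρ] [IsProbabilityMeasure σ],
      (∀ E, MeasurableSet E → ρ E ≤ ENNReal.ofReal (1 + ε) * σ E) →
      ∀ u : X → ℝ, (∀ x, 0 ≤ u x) → Integrable u σ →
      ∫ x, u x ∂ρ ≤ (1 + ε) * ∫ x, u x ∂σ := by
    intro ρ σ _ _ h u hu hui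
    have hle : ρ ≤ ENNReal.ofReal (1 + ε) • σ := Measure.le_iff.2 fun E hE => by
      simpa using h E hE
    have := integral_mono_measure hle (ae_of_all _ hu)
      (hui.smul_measure ENNReal.ofReal_ne_top)
    rwa [integral_smul_measure, ENNReal.toReal_ofReal (by linarith), smul_eq_mul] at this
  set m := ∫ x, F x ∂ν with hm
  have hm0 : 0 ≤ m := integral_nonneg hF0
  have hm1 : m ≤ 1 := by
    have := integral_mono hFν (integrable_const (1 : ℝ)) hF1
    simpa using this
  have hgb : ∀ x, |F x - m| ≤ 1 := fun x => by
    rw [abs_le]; constructor <;> linarith [hF0 x, hF1 x]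
  have hgm : Measurable fun x => F x - m := hFm.sub_const m
  have hpm : Measurable fun x => max (F x - m) 0 := hgm.max measurable_const
  have hnm : Measurable fun x => max (-(F x - m)) 0 := hgm.neg.max measurable_const
  have hpb : ∀ x, |max (F x - m) 0| ≤ 1 := fun x => by
    rw [abs_of_nonneg (le_max_right _ _)]
    exact max_le ((le_abs_self _).trans (hgb x)) zero_le_one
  have hnb : ∀ x, |max (-(F x - m)) 0| ≤ 1 := fun x => by
    rw [abs_of_nonneg (le_max_right _ _)]
    exact max_le ((neg_le_abs _).trans (hgb x)) zero_le_one
  have hpn : ∀ x, max (F x - m) 0 - max (-(F x - m)) 0 = F x - m := fun x => by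
    rcases le_total (F x - m) 0 with h | h
    · rw [max_eq_right h, max_eq_left (by linarith)]; ring
    · rw [max_eq_left h, max_eq_right (by linarith)]; ring
  have hpa : ∀ x, max (F x - m) 0 + max (-(F x - m)) 0 = |F x - m| := fun x => by
    rcases le_total (F x - m) 0 with h | h
    · rw [max_eq_right h, max_eq_left (by linarith), abs_of_nonpos h]; ring
    · rw [max_eq_left h, max_eq_right (by linarith), abs_of_nonneg h]; ring
  have hdiff : ∀ (ρ : Measure X) [IsProbabilityMeasure ρ],
      ∫ x, max (F x - m) 0 ∂ρ - ∫ x, max (-(F x - m)) 0 ∂ρ = ∫ x, F x ∂ρ - m := by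
    intro ρ _
    rw [← integral_sub (hbd ρ _ 1 hpm hpb) (hbd ρ _ 1 hnm hnb)]
    simp_rw [hpn]
    rw [integral_sub (hbd ρ F 1 hFm fun x => by
      rw [abs_of_nonneg (hF0 x)]; exact hF1 x) (integrable_const _)]
    simp
  have dμ := hdiff μ
  have dν := hdiff ν
  have kp := key μ ν h1 _ (fun x => le_max_right (F x - m) 0) (hbd ν _ 1 hpm hpb)
  have kn := key ν μ h2 _ (fun x => le_max_right (-(F x - m)) 0) (hbd μ _ 1 hnm hnb)
  have hSsum : ∫ x, |F x - m| ∂ν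
      = ∫ x, max (F x - m) 0 ∂ν + ∫ x, max (-(F x - m)) 0 ∂ν := by
    rw [← integral_add (hbd ν _ 1 hpm hpb) (hbd ν _ 1 hnm hnb)]
    simp_rw [hpa]
  have hn0 : 0 ≤ ∫ x, max (-(F x - m)) 0 ∂ν := integral_nonneg fun x => le_max_right _ _
  have hn0' : 0 ≤ ∫ x, max (-(F x - m)) 0 ∂μ := integral_nonneg fun x => le_max_right _ _
  set S := ∫ x, |F x - m| ∂ν with hS
  set V := ∫ x, F x ^ 2 ∂ν with hV
  have hV2 : ∫ x, (F x - m) ^ 2 ∂ν = V - m ^ 2 := by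
    have : ∀ x, (F x - m) ^ 2 = (F x ^ 2 - 2 * m * F x) + m ^ 2 := fun x => by ring
    have hi : Integrable (fun x => F x ^ 2 - 2 * m * F x) ν := hF2ν.sub (hFν.const_mul _)
    simp_rw [this]
    rw [integral_add hi (integrable_const _),
      integral_sub hF2ν (hFν.const_mul _), integral_const_mul]
    simp only [integral_const, probReal_univ, smul_eq_mul, one_mul, ← hm, ← hV]
    ring
  have hS2 : S ^ 2 ≤ V - m ^ 2 := by
    have ha : Integrable (fun x => |F x - m|) ν := hbd ν _ 1 hgm.abs fun x => by
      rw [abs_abs]; exact hgb x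
    have hb : Integrable (fun x => (F x - m) ^ 2) ν := hbd ν _ 1 (hgm.pow_const 2) fun x => by
      rw [abs_of_nonneg (sq_nonneg _), ← sq_abs]; exact pow_le_one₀ (abs_nonneg _) (hgb x)
    have h0 : 0 ≤ ∫ x, (|F x - m| - S) ^ 2 ∂ν := integral_nonneg fun x => sq_nonneg _
    have : ∀ x, (|F x - m| - S) ^ 2 = ((F x - m) ^ 2 - 2 * S * |F x - m|) + S ^ 2 := fun x => by
      rw [← sq_abs (F x - m)]; ring
    have hi : Integrable (fun x => (F x - m) ^ 2 - 2 * S * |F x - m|) ν :=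
      hb.sub (ha.const_mul _)
    simp_rw [this] at h0
    rw [integral_add hi (integrable_const _),
      integral_sub hb (ha.const_mul _), integral_const_mul, hV2] at h0
    simp only [integral_const, probReal_univ, smul_eq_mul, one_mul, ← hS] at h0
    nlinarith
  have hA0 : 0 ≤ ∫ x, F x ∂μ := integral_nonneg hF0
  -- The two one-sided comparisons, applied to the positive and negative parts of `F - m`, bound
  -- `∫ (F - m) d(μ - ν)` by `ε ∫ |F - m| dν`.
  have hA : ∫ x, F x ∂μ ≤ m + ε * S := by
    -- `(1 + ε)⁻¹ ≥ 1 - ε` turns the lower bound on the ratio into a linear one.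
    have hn : (1 - ε) * ∫ x, max (-(F x - m)) 0 ∂ν ≤ ∫ x, max (-(F x - m)) 0 ∂μ := by
      rcases le_total 1 ε with h | h
      · exact (mul_nonpos_of_nonpos_of_nonneg (by linarith) hn0).trans hn0'
      · have := mul_le_mul_of_nonneg_left kn (by linarith : 0 ≤ 1 - ε)
        nlinarith [mul_nonneg (sq_nonneg ε) hn0']
    rw [hSsum]
    nlinarith
  have hfin : (∫ x, F x ∂μ) ^ 2 ≤ (1 + ε ^ 2) * V := by
    have e1 : (∫ x, F x ∂μ) ^ 2 ≤ (m + ε * S) ^ 2 := pow_le_pow_left₀ hA0 hA 2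
    have e2 := mul_le_mul_of_nonneg_left hS2 (by positivity : 0 ≤ 1 + ε ^ 2)
    nlinarith [sq_nonneg (ε * m - S)]
  have eμ : ∫⁻ x, f x ∂μ = ENNReal.ofReal (∫ x, F x ∂μ) := by
    rw [ofReal_integral_eq_lintegral_ofReal hFμ (ae_of_all _ hF0)]
    simp_rw [hfF]
  have eν : ∫⁻ x, f x ^ 2 ∂ν = ENNReal.ofReal V := by
    rw [hV, ofReal_integral_eq_lintegral_ofReal hF2ν (ae_of_all _ fun x => sq_nonneg _)]
    simp_rw [hfF, ENNReal.ofReal_pow (hF0 _)]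
  rw [eμ, eν, ← ENNReal.ofReal_pow hA0, ← ENNReal.ofReal_mul (by positivity)]
  exact ENNReal.ofReal_le_ofReal hfin

/-! ### The interaction as a composition of kernels -/

section Interaction

variable {Z O Θ : Type*} [MeasurableSpace Z] [MeasurableSpace O] [MeasurableSpace Θ]
  {T : ℕ} {α : ℝ}

/-- The law of the private observation `o` of round `t` under `M`, as a kernel in the seed and
the past transcript. -/
noncomputable def LDPAlg.obs (alg : LDPAlg Z O Θ T α) (M : Θ → Measure Z)
    (hM : Measurable M) (hMp : ∀ π, IsProbabilityMeasure (M π)) (t : ℕ) :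
    Kernel (alg.R × (Fin t → Θ × O)) O where
  toFun p := (M (alg.dec t p)).bind fun z => alg.chan t p z
  measurable' := by
    refine Measure.measurable_of_measurable_coe _ fun E hE => ?_
    let κ : Kernel (alg.R × (Fin t → Θ × O)) Z := ⟨fun p => M (alg.dec t p),
      hM.comp (alg.dec_meas t)⟩
    have : IsMarkovKernel κ := ⟨fun p => hMp _⟩
    have h := Measurable.lintegral_kernel_prod_right' (κ := κ) (alg.chan_meas t E hE)
    convert h using 2 with p
    exact Measure.bind_apply hE (alg.chan t p).measurable.aemeasurable

lemma LDPAlg.obs_apply (alg : LDPAlg Z O Θ T α) (M : Θ → Measure Z)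
    (hM : Measurable M) (hMp : ∀ π, IsProbabilityMeasure (M π)) (t : ℕ)
    (p : alg.R × (Fin t → Θ × O)) {E : Set O} (hE : MeasurableSet E) :
    alg.obs M hM hMp t p E = ∫⁻ z, alg.chan t p z E ∂(M (alg.dec t p)) :=
  Measure.bind_apply hE (alg.chan t p).measurable.aemeasurable

instance LDPAlg.obs_markov (alg : LDPAlg Z O Θ T α) (M : Θ → Measure Z)
    (hM : Measurable M) (hMp : ∀ π, IsProbabilityMeasure (M π)) (t : ℕ) :
    IsMarkovKernel (alg.obs M hM hMp t) := ⟨fun p => ⟨by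
  have := alg.chan_markov t p
  have := hMp (alg.dec t p)
  rw [alg.obs_apply M hM hMp t p MeasurableSet.univ]
  simp⟩⟩

/-- Mixing the inputs of an `α`-DP channel by two different models keeps the observation laws
within a factor `e^α` of each other. -/
lemma LDPAlg.obs_dp (alg : LDPAlg Z O Θ T α) {M N : Θ → Measure Z}
    (hM : Measurable M) (hMp : ∀ π, IsProbabilityMeasure (M π))
    (hN : Measurable N) (hNp : ∀ π, IsProbabilityMeasure (N π)) (t : ℕ)
    (p : alg.R × (Fin t → Θ × O)) {E : Set O} (hE : MeasurableSet E) :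
    alg.obs M hM hMp t p E ≤ ENNReal.ofReal (Real.exp α) * alg.obs N hN hNp t p E := by
  have := hMp (alg.dec t p)
  have := hNp (alg.dec t p)
  rw [alg.obs_apply M hM hMp t p hE, alg.obs_apply N hN hNp t p hE]
  have h : ∀ z, alg.chan t p z E
      ≤ ENNReal.ofReal (Real.exp α) * ∫⁻ z', alg.chan t p z' E ∂(N (alg.dec t p)) := by
    intro z
    rw [← lintegral_const_mul _ ((alg.chan t p).measurable_coe hE)]
    calc alg.chan t p z E = ∫⁻ _, alg.chan t p z E ∂(N (alg.dec t p)) := by simp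
      _ ≤ _ := lintegral_mono fun z' => alg.chan_dp t p z z' E hE
  calc _ ≤ ∫⁻ _, ENNReal.ofReal (Real.exp α) *
        ∫⁻ z', alg.chan t p z' E ∂(N (alg.dec t p)) ∂(M (alg.dec t p)) := lintegral_mono h
    _ = _ := by simp

lemma LDPAlg.measurable_snoc (alg : LDPAlg Z O Θ T α) (t : ℕ) :
    Measurable fun q : (alg.R × (Fin t → Θ × O)) × O =>
      (Fin.snoc q.1.2 (alg.dec t q.1, q.2) : Fin (t + 1) → Θ × O) := by
  refine measurable_pi_lambda _ fun i => ?_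
  refine Fin.lastCases ?_ (fun j => ?_) i
  · simp only [Fin.snoc_last]
    exact ((alg.dec_meas t).comp measurable_fst).prodMk measurable_snd
  · simp only [Fin.snoc_castSucc]
    exact (measurable_pi_apply j).comp (measurable_snd.comp measurable_fst)

/-- One round of interaction as a kernel: from the seed and the transcript of `t` rounds to
the transcript of `t + 1` rounds. -/
noncomputable def LDPAlg.step (alg : LDPAlg Z O Θ T α) (M : Θ → Measure Z)
    (hM : Measurable M) (hMp : ∀ π, IsProbabilityMeasure (M π)) (t : ℕ) :
    Kernel (alg.R × (Fin t → Θ × O)) (Fin (t + 1) → Θ × O) where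
  toFun p := (alg.obs M hM hMp t p).map fun o => Fin.snoc p.2 (alg.dec t p, o)
  measurable' := by
    refine Measure.measurable_of_measurable_coe _ fun E hE => ?_
    have hs := alg.measurable_snoc t
    have h := Kernel.measurable_kernel_prodMk_left (κ := alg.obs M hM hMp t) (hs hE)
    convert h using 2 with p
    exact Measure.map_apply (hs.comp measurable_prodMk_left) hE

lemma LDPAlg.lintegral_step (alg : LDPAlg Z O Θ T α) (M : Θ → Measure Z)
    (hM : Measurable M) (hMp : ∀ π, IsProbabilityMeasure (M π)) (t : ℕ)
    (p : alg.R × (Fin t → Θ × O)) {f : (Fin (t + 1) → Θ × O) → ℝ≥0∞} (hf : Measurable f) :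
    ∫⁻ x, f x ∂(alg.step M hM hMp t p)
      = ∫⁻ o, f (Fin.snoc p.2 (alg.dec t p, o)) ∂(alg.obs M hM hMp t p) :=
  lintegral_map hf ((alg.measurable_snoc t).comp measurable_prodMk_left)

instance LDPAlg.step_markov (alg : LDPAlg Z O Θ T α) (M : Θ → Measure Z)
    (hM : Measurable M) (hMp : ∀ π, IsProbabilityMeasure (M π)) (t : ℕ) :
    IsMarkovKernel (alg.step M hM hMp t) := ⟨fun _ =>
  Measure.isProbabilityMeasure_map
    ((alg.measurable_snoc t).comp measurable_prodMk_left).aemeasurable⟩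

lemma LDPAlg.histLaw_succ (alg : LDPAlg Z O Θ T α) (M : Θ → Measure Z)
    (hM : Measurable M) (hMp : ∀ π, IsProbabilityMeasure (M π)) (r : alg.R) (t : ℕ) :
    alg.histLaw M r (t + 1)
      = (alg.histLaw M r t).bind fun h => alg.step M hM hMp t (r, h) := rfl

lemma LDPAlg.histLaw_prob (alg : LDPAlg Z O Θ T α) (M : Θ → Measure Z)
    (hM : Measurable M) (hMp : ∀ π, IsProbabilityMeasure (M π)) (r : alg.R) (t : ℕ) :
    IsProbabilityMeasure (alg.histLaw M r t) := by
  induction t with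
  | zero => exact Measure.dirac.isProbabilityMeasure
  | succ t ih =>
    rw [alg.histLaw_succ M hM hMp]
    refine isProbabilityMeasure_bind
      ((alg.step M hM hMp t).measurable.comp measurable_prodMk_left).aemeasurable
      (ae_of_all _ fun h => ?_)
    infer_instance

/-- Measurability of the transcript law in the seed, needed because `Measure.bind` over
the seed is only meaningful for a measurable family. -/
lemma LDPAlg.measurable_histLaw (alg : LDPAlg Z O Θ T α) (M : Θ → Measure Z)
    (hM : Measurable M) (hMp : ∀ π, IsProbabilityMeasure (M π)) (t : ℕ) :
    Measurable fun r => alg.histLaw M r t := by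
  induction t with
  | zero => exact measurable_const
  | succ t ih =>
    refine Measure.measurable_of_measurable_coe _ fun E hE => ?_
    let κ : Kernel alg.R (Fin t → Θ × O) := ⟨fun r => alg.histLaw M r t, ih⟩
    have : IsMarkovKernel κ := ⟨fun r => alg.histLaw_prob M hM hMp r t⟩
    have h := Measurable.lintegral_kernel_prod_right' (κ := κ)
      ((alg.step M hM hMp t).measurable_coe hE)
    convert h using 2 with r
    rw [alg.histLaw_succ M hM hMp]
    exact Measure.bind_apply hE
      ((alg.step M hM hMp t).measurable.comp measurable_prodMk_left).aemeasurable

/-! ### Comparison of two models -/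

/-- The `χ²`-type comparison of transcript laws under two models: each round costs a factor
`1 + (e^α - 1)²`. -/
lemma LDPAlg.sq_lintegral_histLaw_le (alg : LDPAlg Z O Θ T α) (hα : 0 < α)
    {M N : Θ → Measure Z}
    (hM : Measurable M) (hMp : ∀ π, IsProbabilityMeasure (M π))
    (hN : Measurable N) (hNp : ∀ π, IsProbabilityMeasure (N π)) (r : alg.R) (t : ℕ)
    (f : (Fin t → Θ × O) → ℝ≥0∞) (hf : Measurable f) (hf1 : ∀ x, f x ≤ 1) :
    (∫⁻ x, f x ∂(alg.histLaw M r t)) ^ 2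
      ≤ ENNReal.ofReal (1 + (Real.exp α - 1) ^ 2) ^ t * ∫⁻ x, f x ^ 2 ∂(alg.histLaw N r t) := by
  induction t with
  | zero =>
    simp only [LDPAlg.histLaw, pow_zero, one_mul]
    rw [lintegral_dirac' _ hf, lintegral_dirac' _ (hf.pow_const 2)]
  | succ t ih =>
    have hk : ∀ (K : Kernel (alg.R × (Fin t → Θ × O)) (Fin (t + 1) → Θ × O)),
        Measurable fun h => K (r, h) := fun K => K.measurable.comp measurable_prodMk_left
    rw [alg.histLaw_succ M hM hMp, alg.histLaw_succ N hN hNp,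
      Measure.lintegral_bind (hk _).aemeasurable hf.aemeasurable,
      Measure.lintegral_bind (hk _).aemeasurable (hf.pow_const 2).aemeasurable]
    have hg : Measurable fun h => ∫⁻ x, f x ∂(alg.step M hM hMp t (r, h)) :=
      (Measure.measurable_lintegral hf).comp (hk _)
    have hg2 : Measurable fun h => ∫⁻ x, f x ^ 2 ∂(alg.step N hN hNp t (r, h)) :=
      (Measure.measurable_lintegral (hf.pow_const 2)).comp (hk _)
    have hg1 : ∀ h, ∫⁻ x, f x ∂(alg.step M hM hMp t (r, h)) ≤ 1 := fun h =>
      (lintegral_mono hf1).trans (by simp)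
    refine (ih _ hg hg1).trans ?_
    rw [pow_succ _ t, mul_assoc, ← lintegral_const_mul _ hg2]
    gcongr with h
    rw [alg.lintegral_step M hM hMp t _ hf, alg.lintegral_step N hN hNp t _ (hf.pow_const 2)]
    have hε : 0 ≤ Real.exp α - 1 := by linarith [Real.one_lt_exp_iff.2 hα]
    have he : 1 + (Real.exp α - 1) = Real.exp α := by ring
    refine sq_lintegral_le_of_ratio hε (fun E hE => ?_) (fun E hE => ?_)
      (hf.comp ((alg.measurable_snoc t).comp measurable_prodMk_left)) (fun o => hf1 _)
    · rw [he]; exact alg.obs_dp hM hMp hN hNp t _ hE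
    · rw [he]; exact alg.obs_dp hN hNp hM hMp t _ hE

lemma LDPAlg.measurable_outFam (alg : LDPAlg Z O Θ T α) (M : Θ → Measure Z)
    (hM : Measurable M) (hMp : ∀ π, IsProbabilityMeasure (M π)) :
    Measurable fun r => (alg.histLaw M r T).map fun h => alg.out (r, h) := by
  refine Measure.measurable_of_measurable_coe _ fun E hE => ?_
  let κ : Kernel alg.R (Fin T → Θ × O) :=
    ⟨fun r => alg.histLaw M r T, alg.measurable_histLaw M hM hMp T⟩
  have : IsMarkovKernel κ := ⟨fun r => alg.histLaw_prob M hM hMp r T⟩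
  have h := Kernel.measurable_kernel_prodMk_left (κ := κ) (alg.out_meas hE)
  convert h using 2 with r
  exact Measure.map_apply (alg.out_meas.comp measurable_prodMk_left) hE

lemma LDPAlg.outLaw_apply (alg : LDPAlg Z O Θ T α) (M : Θ → Measure Z)
    (hM : Measurable M) (hMp : ∀ π, IsProbabilityMeasure (M π)) {A : Set Θ}
    (hA : MeasurableSet A) :
    alg.outLaw M A = ∫⁻ r, alg.histLaw M r T {h | alg.out (r, h) ∈ A} ∂alg.seed := by
  rw [LDPAlg.outLaw, Measure.bind_apply hA (alg.measurable_outFam M hM hMp).aemeasurable]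
  refine lintegral_congr fun r => ?_
  exact Measure.map_apply (alg.out_meas.comp measurable_prodMk_left) hA

lemma LDPAlg.outLaw_prob (alg : LDPAlg Z O Θ T α) (M : Θ → Measure Z)
    (hM : Measurable M) (hMp : ∀ π, IsProbabilityMeasure (M π)) :
    IsProbabilityMeasure (alg.outLaw M) := by
  have := alg.seedProb
  refine ⟨?_⟩
  rw [alg.outLaw_apply M hM hMp MeasurableSet.univ]
  have : ∀ r, IsProbabilityMeasure (alg.histLaw M r T) := fun r =>
    alg.histLaw_prob M hM hMp r T
  simp

/-- Any output event is comparable under two models, whatever the models are. -/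
lemma LDPAlg.sq_outLaw_le (alg : LDPAlg Z O Θ T α) (hα : 0 < α) {M N : Θ → Measure Z}
    (hM : Measurable M) (hMp : ∀ π, IsProbabilityMeasure (M π))
    (hN : Measurable N) (hNp : ∀ π, IsProbabilityMeasure (N π)) {A : Set Θ}
    (hA : MeasurableSet A) :
    alg.outLaw M A ^ 2
      ≤ ENNReal.ofReal (1 + (Real.exp α - 1) ^ 2) ^ T * alg.outLaw N A := by
  have := alg.seedProb
  have hmeas : ∀ (K : Θ → Measure Z) (hK : Measurable K) (hKp : ∀ π, IsProbabilityMeasure (K π)),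
      Measurable fun r => alg.histLaw K r T {h | alg.out (r, h) ∈ A} := by
    intro K hK hKp
    have h := (Measure.measurable_coe hA).comp (alg.measurable_outFam K hK hKp)
    convert h using 2 with r
    exact (Measure.map_apply (alg.out_meas.comp measurable_prodMk_left) hA).symm
  have hsec : ∀ r, MeasurableSet {h | alg.out (r, h) ∈ A} := fun r =>
    (alg.out_meas.comp measurable_prodMk_left) hA
  rw [alg.outLaw_apply M hM hMp hA, alg.outLaw_apply N hN hNp hA]
  have hJ := sq_lintegral_le_of_ratio (μ := alg.seed) (ν := alg.seed) le_rfl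
    (fun E _ => by simp) (fun E _ => by simp) (hmeas M hM hMp) (fun r => by
      have := alg.histLaw_prob M hM hMp r T
      exact prob_le_one)
  refine hJ.trans ?_
  rw [← lintegral_const_mul _ (hmeas N hN hNp)]
  simp only [ne_eq, OfNat.ofNat_ne_zero, not_false_eq_true, zero_pow, add_zero,
    ENNReal.ofReal_one, one_mul]
  refine lintegral_mono fun r => ?_
  have h := alg.sq_lintegral_histLaw_le hα hM hMp hN hNp r T
    ({h | alg.out (r, h) ∈ A}.indicator 1) (measurable_one.indicator (hsec r))
    (fun x => Set.indicator_le_self' (fun _ _ => zero_le) x)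
  have hsq : ∀ x, ({h | alg.out (r, h) ∈ A}.indicator (1 : (Fin T → Θ × O) → ℝ≥0∞) x) ^ 2
      = {h | alg.out (r, h) ∈ A}.indicator 1 x := fun x => by
    by_cases hx : x ∈ {h | alg.out (r, h) ∈ A} <;> simp [Set.indicator, hx]
  simp_rw [hsq] at h
  rwa [lintegral_indicator_one (hsec r), lintegral_indicator_one (hsec r)] at h

end Interaction

/-! ### The lower bound -/

/-- **Fractional covering number lower bound for interactive locally private learning.**
If a `T`-round `α`-LDP algorithm outputs, for every model `M = Ms i` of the class, a
decision satisfying `P^{M,Alg}(L(M, π_{T+1}) ≤ Δ) ≥ 1/2`, then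
`T ≥ (log DC_Δ(M) − 2)/(2 (e^α − 1)²)`, i.e. `log DC_Δ(M) ≤ 2 T (e^α − 1)² + 2`. -/
theorem ldp_fracCov_lower
    {Z O Θ ι : Type*} [MeasurableSpace Z] [MeasurableSpace O] [MeasurableSpace Θ]
    (Ms : ι → Θ → Measure Z) (hMs : ∀ i π, IsProbabilityMeasure (Ms i π))
    (hMsKer : ∀ i, Measurable (Ms i))
    (loss : ι → Θ → ℝ) (T : ℕ) (hT : 1 ≤ T) (α : ℝ) (hα : 0 < α) (Δ : ℝ) (hΔ : 0 ≤ Δ)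
    (hmeasL : ∀ i, MeasurableSet {π | loss i π ≤ Δ})
    (alg : LDPAlg Z O Θ T α)
    (hsucc : ∀ i : ι, 2⁻¹ ≤ alg.outLaw (Ms i) {π | loss i π ≤ Δ}) :
    ENNReal.log (fracCovDC loss Δ) ≤
      ((2 * T * (Real.exp α - 1) ^ 2 + 2 : ℝ) : EReal) := by
  -- It suffices to exhibit a single decision law `p` that covers every model.
  suffices hp : ∃ p : Measure Θ, IsProbabilityMeasure p ∧ ∀ i,
      (p {π | loss i π ≤ Δ})⁻¹
        ≤ ENNReal.ofReal (Real.exp (2 * T * (Real.exp α - 1) ^ 2 + 2)) by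
    obtain ⟨p, hp, hpi⟩ := hp
    have hle : fracCovDC loss Δ
        ≤ ENNReal.ofReal (Real.exp (2 * T * (Real.exp α - 1) ^ 2 + 2)) :=
      (iInf_le _ (⟨p, hp⟩ : {p : Measure Θ // IsProbabilityMeasure p})).trans (iSup_le hpi)
    refine (ENNReal.log_monotone hle).trans (le_of_eq ?_)
    rw [ENNReal.log_ofReal_of_pos (Real.exp_pos _), Real.log_exp]
  have hprob := alg.seedProb
  rcases isEmpty_or_nonempty ι with hι | ⟨⟨i₀⟩⟩
  · obtain ⟨r⟩ : Nonempty alg.R := nonempty_of_isProbabilityMeasure alg.seed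
    exact ⟨Measure.dirac (alg.dec 0 (r, fun i => i.elim0)), inferInstance,
      fun i => (hι.false i).elim⟩
  refine ⟨alg.outLaw (Ms i₀), alg.outLaw_prob _ (hMsKer i₀) (hMs i₀), fun i => ?_⟩
  have h := alg.sq_outLaw_le hα (hMsKer i) (hMs i) (hMsKer i₀) (hMs i₀) (hmeasL i)
  have h4 : (2⁻¹ : ℝ≥0∞) ^ 2 ≤ ENNReal.ofReal (1 + (Real.exp α - 1) ^ 2) ^ T
      * alg.outLaw (Ms i₀) {π | loss i π ≤ Δ} :=
    (pow_le_pow_left₀ zero_le (hsucc i) 2).trans h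
  set q := alg.outLaw (Ms i₀) {π | loss i π ≤ Δ}
  set C := ENNReal.ofReal (1 + (Real.exp α - 1) ^ 2) ^ T with hC
  have hCtop : C ≠ ⊤ := ENNReal.pow_ne_top ENNReal.ofReal_ne_top
  have hq : q⁻¹ ≤ 4 * C := by
    rw [ENNReal.inv_le_iff_inv_le]
    rw [ENNReal.mul_inv (by simp) (by simp)]
    have h4' : (4 : ℝ≥0∞)⁻¹ ≤ q * C := by
      rw [mul_comm]
      convert h4 using 1
      rw [← ENNReal.inv_pow]; norm_num
    rw [← div_eq_mul_inv]
    exact ENNReal.div_le_of_le_mul h4'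
  refine hq.trans ?_
  rw [hC, ← ENNReal.ofReal_pow (by positivity),
    show (4 : ℝ≥0∞) = ENNReal.ofReal 4 by norm_num, ← ENNReal.ofReal_mul (by norm_num)]
  refine ENNReal.ofReal_le_ofReal ?_
  have e4 : (4 : ℝ) ≤ Real.exp 2 := by
    rw [show (2 : ℝ) = 1 + 1 by norm_num, Real.exp_add]
    nlinarith [Real.add_one_le_exp (1 : ℝ)]
  have eC : (1 + (Real.exp α - 1) ^ 2) ^ T ≤ Real.exp (2 * T * (Real.exp α - 1) ^ 2) := by
    calc (1 + (Real.exp α - 1) ^ 2) ^ T ≤ Real.exp ((Real.exp α - 1) ^ 2) ^ T := by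
          refine pow_le_pow_left₀ (by positivity) ?_ T
          linarith [Real.add_one_le_exp ((Real.exp α - 1) ^ 2)]
      _ = Real.exp (T * (Real.exp α - 1) ^ 2) := by rw [← Real.exp_nat_mul]
      _ ≤ _ := by
          refine Real.exp_le_exp.2 ?_
          have : 0 ≤ (T : ℝ) * (Real.exp α - 1) ^ 2 := by positivity
          linarith
  rw [add_comm _ (2 : ℝ), Real.exp_add]
  exact mul_le_mul e4 eC (by positivity) (Real.exp_pos _).le
end

section
/- Fractional covering numbers for agnostic and realizable regression: Let X be a finite set, let F and F⁺ be countable classes of functions X → [−1,1] with F finite, let Z := X × [−1,1], and fix Δ > 0. For a measurable loss 𝓛 : [−1,1]² → [0,1], the regression loss of a decision f ∈ F⁺ under a probability measure M on Z is L(M, f) := E_{(x,y)∼M} 𝓛(y, f(x)) − min_{f*∈F} E_{(x,y)∼M} 𝓛(y, f*(x)). Let M_agnostic be the class of all probability measures on Z, and let M_realizable be the class of all probability measures M on Z such that y = f_M(x) M-almost surely for some f_M ∈ F. Then: (i) if 𝓛(y, ·) is 1-Lipschitz in its second argument for every y, then DC_Δ(M_agnostic) ≤ DC_Δ(F, F⁺);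 (ii) for the absolute loss 𝓛(y, y′) = |y − y′|, one has DC_Δ(M_agnostic) = DC_Δ(F, F⁺) = DC_Δ(M_realizable). -/
/-!
The fractional covering numbers are compared one distribution `p` on `F⁺` at a time, through
inclusions between the sets of good decisions.

Upper bound (`modelDC_agnostic_le`): given a model `M`, let `μ` be its marginal on `X` and let `g`
minimise the expected loss over `F`. The Lipschitz property gives
`L(M, f) ≤ E_{x∼μ} |f(x) - g(x)|`, so every `f` that is `Δ`-close to `g` in `L¹(μ)` is
`Δ`-optimal for `M`.

Lower bound (`pairDC_le_modelDC_realizable`): given `(μ, g)`, the law `M` of `(x, g(x))` with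
`x ∼ μ` is realizable, the minimum over `F` of its expected absolute loss is `0`, and hence
`L(M, f) = E_{x∼μ} |f(x) - g(x)|` exactly.

As realizable models are agnostic ones (`Mrealizable_subset_Magnostic`), for the absolute
loss the three numbers form a cycle of inequalities.
-/

open MeasureTheory
open scoped ENNReal

/-- The regression loss of a decision `f ∈ F⁺` under a model `M ∈ Δ(X × [−1,1])`:
`L(M, f) := E_{(x,y)∼M} 𝓛(y, f(x)) − min_{f* ∈ F} E_{(x,y)∼M} 𝓛(y, f*(x))`. -/
noncomputable def regLoss {X F F' : Type*} [Fintype F] [MeasurableSpace X]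
    (lossFn : ℝ → ℝ → ℝ) (evF : F → X → ℝ) (evF' : F' → X → ℝ)
    (M : Measure (X × ℝ)) (f : F') : ℝ :=
  (∫ z, lossFn z.2 (evF' f z.1) ∂M) - ⨅ g : F, ∫ z, lossFn z.2 (evF g z.1) ∂M

/-- The fractional covering number of a class `cls` of models on `Z = X × ℝ`, with decision
space `F⁺` and regression loss built from `𝓛`:
`DC_Δ(cls) := inf_{p ∈ Δ(F⁺)} sup_{M ∈ cls} 1 / p({f : L(M,f) ≤ Δ})`. -/
noncomputable def modelDC {X F F' : Type*} [Fintype F] [MeasurableSpace X]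
    (lossFn : ℝ → ℝ → ℝ) (evF : F → X → ℝ) (evF' : F' → X → ℝ)
    (cls : Set (Measure (X × ℝ))) (Δ : ℝ) : ℝ≥0∞ :=
  ⨅ p : PMF F', ⨆ M : cls,
    (p.toOuterMeasure {f | regLoss lossFn evF evF' M.1 f ≤ Δ})⁻¹

/-- The fractional covering number of the pair `(F, F⁺)`:
`DC_Δ(F, F⁺) := inf_{p ∈ Δ(F⁺)} sup_{μ ∈ Δ(X), f* ∈ F}
  1 / p({f ∈ F⁺ : E_{x∼μ} |f(x) − f*(x)| ≤ Δ})`. -/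
noncomputable def pairDC {X F F' : Type*} [Fintype X]
    (evF : F → X → ℝ) (evF' : F' → X → ℝ) (Δ : ℝ) : ℝ≥0∞ :=
  ⨅ p : PMF F', ⨆ (μ : PMF X) (g : F),
    (p.toOuterMeasure {f | (∑ x, (μ x).toReal * |evF' f x - evF g x|) ≤ Δ})⁻¹

/-- The class of all probability measures on `X × [−1,1]` (agnostic regression). -/
def Magnostic (X : Type*) [MeasurableSpace X] : Set (Measure (X × ℝ)) :=
  {M | IsProbabilityMeasure M ∧ M {z | z.2 ∈ Set.Icc (-1 : ℝ) 1} = 1}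

/-- The class of models realizable by `F`: probability measures `M` on `X × ℝ` with
`y = f_M(x)` `M`-a.s. for some `f_M ∈ F`. -/
def Mrealizable {X F : Type*} [MeasurableSpace X] (evF : F → X → ℝ) :
    Set (Measure (X × ℝ)) :=
  {M | IsProbabilityMeasure M ∧ ∃ g : F, M {z | z.2 = evF g z.1} = 1}

/-- A loss that is measurable, and bounded on `[-1,1]²`, has integrable composition with any
function `h : X → [-1,1]` under every model on `X × [-1,1]`. -/
lemma integrable_loss {X : Type*} [Finite X] [MeasurableSpace X] [MeasurableSingletonClass X]
    {lossFn : ℝ → ℝ → ℝ} (hmeas : Measurable (Function.uncurry lossFn)) {C : ℝ}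
    (hbd : ∀ y ∈ Set.Icc (-1 : ℝ) 1, ∀ y' ∈ Set.Icc (-1 : ℝ) 1, |lossFn y y'| ≤ C)
    {h : X → ℝ} (hh : ∀ x, h x ∈ Set.Icc (-1 : ℝ) 1)
    {M : Measure (X × ℝ)} [IsFiniteMeasure M] (hM : ∀ᵐ z ∂M, z.2 ∈ Set.Icc (-1 : ℝ) 1) :
    Integrable (fun z => lossFn z.2 (h z.1)) M := by
  have h1 : Measurable h := measurable_of_finite h
  have h2 : Measurable (fun z : X × ℝ => lossFn z.2 (h z.1)) :=
    hmeas.comp (measurable_snd.prodMk (h1.comp measurable_fst))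
  refine Integrable.of_bound h2.aestronglyMeasurable C ?_
  filter_upwards [hM] with z hz
  exact hbd _ hz _ (hh _)

/-- The expectation of `u` under the marginal of `M` on `X`, as an integral against `M`. -/
lemma sum_marginal {X : Type*} [Fintype X] [MeasurableSpace X] [MeasurableSingletonClass X]
    (M : Measure (X × ℝ)) [IsProbabilityMeasure (M.map Prod.fst)] (u : X → ℝ) :
    ∑ x, ((M.map Prod.fst).toPMF x).toReal * u x = ∫ z, u z.1 ∂M := by
  have h := PMF.integral_eq_sum (M.map Prod.fst).toPMF u
  rw [Measure.toPMF_toMeasure, integral_map measurable_fst.aemeasurable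
    (measurable_of_finite u).aestronglyMeasurable] at h
  simpa using h.symm

/-- The excess loss under an agnostic model is dominated by the `L¹` distance to the best
predictor in `F`, so covering the pair covers the agnostic class. -/
lemma modelDC_agnostic_le {X F F' : Type*} [Fintype X] [MeasurableSpace X]
    [MeasurableSingletonClass X] [Fintype F] [Nonempty F]
    (evF : F → X → ℝ) (hevF : ∀ g x, evF g x ∈ Set.Icc (-1 : ℝ) 1)
    (evF' : F' → X → ℝ) (hevF' : ∀ f x, evF' f x ∈ Set.Icc (-1 : ℝ) 1) (Δ : ℝ)
    (lossFn : ℝ → ℝ → ℝ) (hmeas : Measurable (Function.uncurry lossFn)) (C : ℝ)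
    (hbd : ∀ y ∈ Set.Icc (-1 : ℝ) 1, ∀ y' ∈ Set.Icc (-1 : ℝ) 1, |lossFn y y'| ≤ C)
    (hlip : ∀ y ∈ Set.Icc (-1 : ℝ) 1, ∀ a ∈ Set.Icc (-1 : ℝ) 1, ∀ b ∈ Set.Icc (-1 : ℝ) 1,
        |lossFn y a - lossFn y b| ≤ |a - b|) :
    modelDC lossFn evF evF' (Magnostic X) Δ ≤ pairDC evF evF' Δ := by
  refine iInf_mono fun p => iSup_le ?_
  rintro ⟨M, hprob, hM⟩
  have hM' : ∀ᵐ z ∂M, z.2 ∈ Set.Icc (-1 : ℝ) 1 :=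
    (mem_ae_iff_prob_eq_one (measurable_snd measurableSet_Icc)).2 hM
  have : IsProbabilityMeasure (M.map Prod.fst) :=
    Measure.isProbabilityMeasure_map measurable_fst.aemeasurable
  obtain ⟨g, hg⟩ := exists_eq_ciInf_of_finite (f := fun g : F => ∫ z, lossFn z.2 (evF g z.1) ∂M)
  refine le_iSup_of_le (M.map Prod.fst).toPMF (le_iSup_of_le g ?_)
  refine ENNReal.inv_le_inv.2 (measure_mono fun f hf => ?_)
  refine le_trans ?_ (show _ ≤ Δ from hf)
  rw [sum_marginal M (fun x => |evF' f x - evF g x|), regLoss, ← hg,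
    ← integral_sub (integrable_loss hmeas hbd (hevF' f) hM')
      (integrable_loss hmeas hbd (hevF g) hM')]
  refine integral_mono_ae ((integrable_loss hmeas hbd (hevF' f) hM').sub
      (integrable_loss hmeas hbd (hevF g) hM')) ?_ ?_
  · have hm : Measurable (fun x => |evF' f x - evF g x|) := measurable_of_finite _
    refine Integrable.of_bound (hm.comp measurable_fst).aestronglyMeasurable 2
      (Filter.Eventually.of_forall fun z => ?_)
    have h1 := hevF' f z.1
    have h2 := hevF g z.1
    simp only [Set.mem_Icc, Real.norm_eq_abs, abs_abs] at *
    rw [abs_le]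
    constructor <;> linarith
  · filter_upwards [hM'] with z hz
    exact (le_abs_self _).trans (hlip _ hz _ (hevF' f _) _ (hevF g _))

/-- For the absolute loss, the law of `(x, g(x))` with `x ∼ μ` has excess loss equal to the `L¹(μ)`
distance to `g`, so covering the realizable class covers the pair. -/
lemma pairDC_le_modelDC_realizable {X F F' : Type*} [Fintype X] [MeasurableSpace X]
    [MeasurableSingletonClass X] [Fintype F]
    (evF : F → X → ℝ) (evF' : F' → X → ℝ) (Δ : ℝ) :
    pairDC evF evF' Δ ≤
      modelDC (fun y y' => |y - y'|) evF evF' (Mrealizable evF) Δ := by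
  refine iInf_mono fun p => iSup_le fun μ => iSup_le fun g => ?_
  have hm : Measurable (fun x => (x, evF g x)) := measurable_of_finite _
  set M : Measure (X × ℝ) := μ.toMeasure.map (fun x => (x, evF g x)) with hMdef
  have hprob : IsProbabilityMeasure M := Measure.isProbabilityMeasure_map hm.aemeasurable
  have hint : ∀ h : X → ℝ, ∫ z, |z.2 - h z.1| ∂M = ∑ x, (μ x).toReal * |h x - evF g x| := by
    intro h
    have hmh : Measurable (fun z : X × ℝ => |z.2 - h z.1|) :=
      (measurable_snd.sub ((measurable_of_finite h).comp measurable_fst)).abs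
    rw [hMdef, integral_map hm.aemeasurable hmh.aestronglyMeasurable, PMF.integral_eq_sum]
    simp [abs_sub_comm]
  have hmem : M ∈ Mrealizable evF := by
    refine ⟨hprob, g, ?_⟩
    have hs : MeasurableSet {z : X × ℝ | z.2 = evF g z.1} :=
      measurableSet_eq_fun measurable_snd ((measurable_of_finite (evF g)).comp measurable_fst)
    rw [hMdef, Measure.map_apply hm hs]
    simp
  have hinf : (⨅ g' : F, ∫ z, |z.2 - evF g' z.1| ∂M) = 0 := by
    have hnn : ∀ g' : F, 0 ≤ ∫ z, |z.2 - evF g' z.1| ∂M :=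
      fun g' => integral_nonneg fun z => abs_nonneg _
    refine le_antisymm ?_ (Real.iInf_nonneg hnn)
    refine (ciInf_le ⟨0, by rintro _ ⟨g', rfl⟩; exact hnn g'⟩ g).trans ?_
    rw [hint]
    simp
  refine le_iSup_of_le ⟨M, hmem⟩ ?_
  refine ENNReal.inv_le_inv.2 (measure_mono fun f hf => ?_)
  have hf' : regLoss (fun y y' => |y - y'|) evF evF' M f ≤ Δ := hf
  rw [regLoss, hinf, sub_zero, hint] at hf'
  exact hf'

lemma Mrealizable_subset_Magnostic {X F : Type*} [Finite X] [MeasurableSpace X]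
    [MeasurableSingletonClass X]
    (evF : F → X → ℝ) (hevF : ∀ g x, evF g x ∈ Set.Icc (-1 : ℝ) 1) :
    Mrealizable evF ⊆ Magnostic X := by
  rintro M ⟨hprob, g, hg⟩
  refine ⟨hprob, le_antisymm prob_le_one (hg ▸ measure_mono fun z hz => ?_)⟩
  have hz' : z.2 = evF g z.1 := hz
  simpa only [Set.mem_ofPred_eq, hz'] using hevF g z.1

lemma modelDC_mono {X F F' : Type*} [Fintype F] [MeasurableSpace X]
    (lossFn : ℝ → ℝ → ℝ) (evF : F → X → ℝ) (evF' : F' → X → ℝ)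
    {c d : Set (Measure (X × ℝ))} (h : c ⊆ d) (Δ : ℝ) :
    modelDC lossFn evF evF' c Δ ≤ modelDC lossFn evF evF' d Δ :=
  iInf_mono fun _ => iSup_le fun M => le_iSup_of_le ⟨M.1, h M.2⟩ le_rfl

/-- **Fractional covering numbers for agnostic and realizable regression.** Let `X` be a
finite set, `F` (finite, nonempty) and `F⁺` (countable) classes of functions `X → [−1,1]`,
and `Δ > 0`.  Then: (i) if `𝓛(y,·)` is 1-Lipschitz for every `y ∈ [−1,1]`, then
`DC_Δ(M_agnostic) ≤ DC_Δ(F, F⁺)`; (ii) for the absolute loss `𝓛(y,y') = |y − y'|`,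
`DC_Δ(M_agnostic) = DC_Δ(F, F⁺) = DC_Δ(M_realizable)`. -/
theorem regression_fracCov
    {X F F' : Type*} [Fintype X] [MeasurableSpace X] [MeasurableSingletonClass X]
    [Fintype F] [Nonempty F] [Countable F']
    (evF : F → X → ℝ) (hevF : ∀ g x, evF g x ∈ Set.Icc (-1 : ℝ) 1)
    (evF' : F' → X → ℝ) (hevF' : ∀ f x, evF' f x ∈ Set.Icc (-1 : ℝ) 1)
    (Δ : ℝ) (hΔ : 0 < Δ)
    (lossFn : ℝ → ℝ → ℝ) (hmeas : Measurable (Function.uncurry lossFn))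
    (hrange : ∀ y ∈ Set.Icc (-1 : ℝ) 1, ∀ y' ∈ Set.Icc (-1 : ℝ) 1,
      lossFn y y' ∈ Set.Icc (0 : ℝ) 1) :
    ((∀ y ∈ Set.Icc (-1 : ℝ) 1, ∀ a ∈ Set.Icc (-1 : ℝ) 1, ∀ b ∈ Set.Icc (-1 : ℝ) 1,
        |lossFn y a - lossFn y b| ≤ |a - b|) →
      modelDC lossFn evF evF' (Magnostic X) Δ ≤ pairDC evF evF' Δ) ∧
    modelDC (fun y y' => |y - y'|) evF evF' (Magnostic X) Δ = pairDC evF evF' Δ ∧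
    modelDC (fun y y' => |y - y'|) evF evF' (Mrealizable evF) Δ = pairDC evF evF' Δ := by
  have hup : modelDC (fun y y' => |y - y'|) evF evF' (Magnostic X) Δ ≤ pairDC evF evF' Δ := by
    refine modelDC_agnostic_le evF hevF evF' hevF' Δ _ ?_ 2 ?_ ?_
    · exact (measurable_fst.sub measurable_snd).abs
    · rintro y ⟨h1, h2⟩ y' ⟨h3, h4⟩
      rw [abs_abs, abs_le]
      constructor <;> linarith
    · intro y _ a _ b _
      have h := abs_abs_sub_abs_le_abs_sub (y - a) (y - b)
      rwa [sub_sub_sub_cancel_left, abs_sub_comm b a] at h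
  have hlow := pairDC_le_modelDC_realizable evF evF' Δ
  have hmid := modelDC_mono (fun y y' => |y - y'|) evF evF'
    (Mrealizable_subset_Magnostic evF hevF) Δ
  refine ⟨fun hlip => ?_, le_antisymm hup (hlow.trans hmid),
    le_antisymm (hmid.trans hup) hlow⟩
  refine modelDC_agnostic_le evF hevF evF' hevF' Δ lossFn hmeas 1 (fun y hy y' hy' => ?_) hlip
  obtain ⟨h1, h2⟩ := hrange y hy y' hy'
  rwa [abs_of_nonneg h1]
end

section
/- Separation between proper and improper linear regression via fractional covering numbers: Let X be the closed Euclidean unit ball of ℝ^d, let F_Lin := { f_θ = ⟨θ, ·⟩ : θ ∈ ℝ^d, ‖θ‖ ≤ 1 } and F_Lin⁺ := { f_θ = ⟨θ, ·⟩ : θ ∈ ℝ^d }. Then: (i) there exist universal constants c > 0 and d₀ such that for all d ≥ d₀, log DC_{1/2}(F_Lin, F_Lin) ≥ c·d; (ii) there exist universal constants C₀ and Δ₀ ∈ (0,1) such that for all d ≥ 1 and all Δ ∈ (0, Δ₀], log DC_Δ(F_Lin, F_Lin⁺) ≤ (C₀/Δ²)·log(1/Δ). -/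
/-!
*Lower bound, proper case.* Take `v` uniform among the `2 ^ d` vectors with coordinates `± 1 / √d`,
and test with `θ* = v` and `μ = δ_v`. A covered `θ` has `⟪θ, v⟫ ≥ 1 / 2`, whereas for each fixed `θ`
in the unit ball the Chernoff bound (`sum_exp_signVec_le`) gives this probability at most
`exp (-d / 8)`. Averaging over `v` shows that every `p` gives mass at most `exp (-d / 8)` to the set
attached to some `v` (`exists_signVec_measure_le`).

*Upper bound, improper case.* Let `p` be the centred Gaussian with covariance `(Δ / 4) ^ 2 • 1`, of
density proportional to `exp (-b ‖θ‖ ^ 2)` with `b = 8 / Δ ^ 2`. The set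
`B = {η | E_μ |⟪η, x⟫| ≤ Δ}` is symmetric and, by Fubini, Markov and a bound on the one-dimensional
marginals valid for every `‖x‖ ≤ 1`, has mass at least `1 / 2`. Translating a symmetric set by `θ*`
decreases the Gaussian mass by a factor at most `exp (b ‖θ*‖ ^ 2)`
(`gaussMeasure_translate_ge`), so the covering number is at most `2 exp (8 / Δ ^ 2)`,
whatever the dimension.
-/


open MeasureTheory
open scoped ENNReal RealInnerProductSpace

/-- The fractional covering number `DC_Δ(F_Lin, F_Lin)` for *proper* linear regression on
the unit ball `X = B^d(1)`: distributions `p` range over Borel probability measures on the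
parameter unit ball, `μ` over Borel probability measures on `X`, and `θ*` over the unit
ball; the covered set is `{θ : E_{x∼μ} |⟨θ − θ*, x⟩| ≤ Δ}`. -/
noncomputable def dcProperLin (d : ℕ) (Δ : ℝ) : ℝ≥0∞ :=
  ⨅ p : {p : Measure {θ : EuclideanSpace ℝ (Fin d) // ‖θ‖ ≤ 1} // IsProbabilityMeasure p},
    ⨆ (μ : {μ : Measure {x : EuclideanSpace ℝ (Fin d) // ‖x‖ ≤ 1} //
        IsProbabilityMeasure μ})
      (θs : {θ : EuclideanSpace ℝ (Fin d) // ‖θ‖ ≤ 1}),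
      (p.1 {θ | (∫ x, |⟪(θ : EuclideanSpace ℝ (Fin d)) - (θs : EuclideanSpace ℝ (Fin d)),
          (x : EuclideanSpace ℝ (Fin d))⟫| ∂μ.1) ≤ Δ})⁻¹

/-- The fractional covering number `DC_Δ(F_Lin, F_Lin⁺)` for *improper* linear regression:
here `p` ranges over Borel probability measures on all of `ℝ^d`. -/
noncomputable def dcImproperLin (d : ℕ) (Δ : ℝ) : ℝ≥0∞ :=
  ⨅ p : {p : Measure (EuclideanSpace ℝ (Fin d)) // IsProbabilityMeasure p},
    ⨆ (μ : {μ : Measure {x : EuclideanSpace ℝ (Fin d) // ‖x‖ ≤ 1} //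
        IsProbabilityMeasure μ})
      (θs : {θ : EuclideanSpace ℝ (Fin d) // ‖θ‖ ≤ 1}),
      (p.1 {θ | (∫ x, |⟪θ - (θs : EuclideanSpace ℝ (Fin d)),
          (x : EuclideanSpace ℝ (Fin d))⟫| ∂μ.1) ≤ Δ})⁻¹

/-! ### Proper case -/

/-- The vector with coordinates `± 1 / √d`, the signs being prescribed by `ε`. -/
noncomputable def signVec (d : ℕ) (ε : Fin d → Bool) : EuclideanSpace ℝ (Fin d) :=
  WithLp.toLp 2 fun i => (if ε i then 1 else -1) / √(d : ℝ)

lemma norm_signVec {d : ℕ} (hd : 1 ≤ d) (ε : Fin d → Bool) : ‖signVec d ε‖ = 1 := by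
  have hd' : (d : ℝ) ≠ 0 := by positivity
  have h : ∀ i, ‖signVec d ε i‖ ^ 2 = 1 / (d : ℝ) := by
    intro i
    rw [Real.norm_eq_abs, sq_abs]
    show ((if ε i then (1 : ℝ) else -1) / √(d : ℝ)) ^ 2 = _
    rw [div_pow, Real.sq_sqrt (Nat.cast_nonneg d)]
    split_ifs <;> simp
  rw [EuclideanSpace.norm_eq, Finset.sum_congr rfl fun i _ => h i]
  simp [hd']

/-- Chernoff bound for the sign vectors, with the optimal exponential tilt `d / 2`. -/
lemma sum_exp_signVec_le {d : ℕ} (hd : 1 ≤ d) (θ : EuclideanSpace ℝ (Fin d)) (hθ : ‖θ‖ ≤ 1) :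
    ∑ ε : Fin d → Bool, Real.exp ((d / 2 : ℝ) * (⟪θ, signVec d ε⟫ - 1 / 2))
      ≤ ∑ _ε : Fin d → Bool, Real.exp (-(d / 8 : ℝ)) := by
  have hd' : (d : ℝ) ≠ 0 := by positivity
  set a : Fin d → ℝ := fun i => (d / 2 : ℝ) * θ i / √(d : ℝ) with ha
  have ha2 : ∑ i, a i ^ 2 / 2 ≤ (d / 8 : ℝ) := by
    have h1 : ∀ i, a i ^ 2 / 2 = (d / 8 : ℝ) * θ i ^ 2 := by
      intro i
      simp only [ha]
      rw [div_pow, Real.sq_sqrt (Nat.cast_nonneg d)]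
      field_simp
      ring
    have h2 : ∑ i, θ i ^ 2 ≤ 1 := by
      have := EuclideanSpace.real_norm_sq_eq θ
      rw [← this]
      nlinarith [norm_nonneg θ]
    rw [Finset.sum_congr rfl fun i _ => h1 i, ← Finset.mul_sum]
    have : (0 : ℝ) ≤ d / 8 := by positivity
    nlinarith
  have hexp : ∀ ε : Fin d → Bool, Real.exp ((d / 2 : ℝ) * (⟪θ, signVec d ε⟫ - 1 / 2))
      = Real.exp (-(d / 4 : ℝ)) * ∏ i, Real.exp ((if ε i then 1 else -1) * a i) := by
    intro ε
    rw [← Real.exp_sum, ← Real.exp_add]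
    congr 1
    rw [PiLp.inner_apply, mul_sub, Finset.mul_sum]
    have : ∀ i, (d / 2 : ℝ) * ⟪θ i, signVec d ε i⟫ = (if ε i then 1 else -1) * a i := by
      intro i
      show (d / 2 : ℝ) * (((if ε i then (1 : ℝ) else -1) / √(d : ℝ)) * θ i) = _
      simp only [ha]
      ring
    rw [Finset.sum_congr rfl fun i _ => this i]
    ring
  have hprod : ∏ i, ∑ s : Bool, Real.exp ((if s then 1 else -1) * a i)
      ≤ 2 ^ d * Real.exp (d / 8 : ℝ) := by
    calc ∏ i, ∑ s : Bool, Real.exp ((if s then 1 else -1) * a i)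
        ≤ ∏ i : Fin d, 2 * Real.exp (a i ^ 2 / 2) := by
          refine Finset.prod_le_prod (fun i _ => by positivity) fun i _ => ?_
          have := Real.cosh_le_exp_half_sq (a i)
          rw [Real.cosh_eq] at this
          simp only [Fintype.sum_bool, if_true, Bool.false_eq_true, if_false, one_mul, neg_mul]
          linarith
      _ = 2 ^ d * Real.exp (∑ i, a i ^ 2 / 2) := by
          rw [Finset.prod_mul_distrib, ← Real.exp_sum]
          simp
      _ ≤ _ := by gcongr
  rw [Finset.sum_congr rfl fun ε _ => hexp ε, ← Finset.mul_sum, ← Fintype.prod_sum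
    (fun i (s : Bool) => Real.exp ((if s then 1 else -1) * a i))]
  calc _ ≤ Real.exp (-(d / 4 : ℝ)) * (2 ^ d * Real.exp (d / 8 : ℝ)) := by gcongr
    _ = 2 ^ d * Real.exp (-(d / 8 : ℝ)) := by
      rw [mul_left_comm, ← Real.exp_add]
      congr 2
      ring
    _ = _ := by simp

lemma exists_signVec_measure_le {d : ℕ} (hd : 1 ≤ d)
    (p : Measure {θ : EuclideanSpace ℝ (Fin d) // ‖θ‖ ≤ 1}) [IsProbabilityMeasure p] :
    ∃ ε : Fin d → Bool, p {θ | |⟪(θ : EuclideanSpace ℝ (Fin d)) - signVec d ε, signVec d ε⟫| ≤ 1 / 2}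
      ≤ ENNReal.ofReal (Real.exp (-(d / 8 : ℝ))) := by
  have hmeas : ∀ ε : Fin d → Bool, Measurable
      fun θ : {θ : EuclideanSpace ℝ (Fin d) // ‖θ‖ ≤ 1} =>
        ENNReal.ofReal (Real.exp ((d / 2 : ℝ) *
          (⟪(θ : EuclideanSpace ℝ (Fin d)), signVec d ε⟫ - 1 / 2))) := by
    intro ε
    refine Measurable.ennreal_ofReal (Continuous.measurable ?_)
    fun_prop
  have h1 : ∀ ε : Fin d → Bool,
      p {θ | |⟪(θ : EuclideanSpace ℝ (Fin d)) - signVec d ε, signVec d ε⟫| ≤ 1 / 2}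
        ≤ ∫⁻ θ, ENNReal.ofReal (Real.exp ((d / 2 : ℝ) *
          (⟪(θ : EuclideanSpace ℝ (Fin d)), signVec d ε⟫ - 1 / 2))) ∂p := by
    intro ε
    refine le_trans (measure_mono ?_)
      (le_trans (le_of_eq (one_mul _).symm) (mul_meas_ge_le_lintegral (hmeas ε) 1))
    intro θ hθ
    simp only [Set.mem_ofPred_eq] at hθ ⊢
    rw [inner_sub_left, real_inner_self_eq_norm_sq, norm_signVec hd, abs_le] at hθ
    rw [ENNReal.one_le_ofReal]
    apply Real.one_le_exp
    have : (0 : ℝ) ≤ d / 2 := by positivity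
    exact mul_nonneg this (by linarith [hθ.1])
  have h2 : ∑ ε : Fin d → Bool,
      p {θ | |⟪(θ : EuclideanSpace ℝ (Fin d)) - signVec d ε, signVec d ε⟫| ≤ 1 / 2}
        ≤ ∑ _ε : Fin d → Bool, ENNReal.ofReal (Real.exp (-(d / 8 : ℝ))) := by
    refine (Finset.sum_le_sum fun ε _ => h1 ε).trans ?_
    rw [← lintegral_finsetSum _ fun ε _ => hmeas ε]
    calc _ ≤ ∫⁻ _θ, ∑ _ε : Fin d → Bool, ENNReal.ofReal (Real.exp (-(d / 8 : ℝ))) ∂p := by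
          refine lintegral_mono fun θ => ?_
          rw [← ENNReal.ofReal_sum_of_nonneg fun _ _ => (Real.exp_pos _).le,
            ← ENNReal.ofReal_sum_of_nonneg fun _ _ => (Real.exp_pos _).le]
          exact ENNReal.ofReal_le_ofReal (sum_exp_signVec_le hd θ.1 θ.2)
      _ = _ := by rw [lintegral_const, measure_univ, mul_one]
  obtain ⟨ε, -, hε⟩ := ENNReal.exists_le_of_sum_le Finset.univ_nonempty h2
  exact ⟨ε, hε⟩

lemma exp_le_dcProperLin {d : ℕ} (hd : 1 ≤ d) :
    ENNReal.ofReal (Real.exp (d / 8 : ℝ)) ≤ dcProperLin d (1 / 2) := by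
  refine le_iInf fun ⟨p, hp⟩ => ?_
  obtain ⟨ε, hε⟩ := exists_signVec_measure_le hd p
  have hv := (norm_signVec hd ε).le
  refine le_iSup₂_of_le ⟨Measure.dirac ⟨signVec d ε, hv⟩, inferInstance⟩ ⟨signVec d ε, hv⟩ ?_
  rw [ENNReal.le_inv_iff_le_inv, ← ENNReal.ofReal_inv_of_pos (Real.exp_pos _), ← Real.exp_neg]
  simpa only [integral_dirac] using hε

/-! ### Improper case -/

/-- The unnormalized Gaussian density `exp (-b ‖x‖ ^ 2)`. -/
noncomputable def gaussWeight {d : ℕ} (b : ℝ) (x : EuclideanSpace ℝ (Fin d)) : ℝ≥0∞ :=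
  ENNReal.ofReal (Real.exp (-b * ‖x‖ ^ 2))

lemma measurable_gaussWeight {d : ℕ} (b : ℝ) :
    Measurable (gaussWeight b : EuclideanSpace ℝ (Fin d) → ℝ≥0∞) := by
  refine Measurable.ennreal_ofReal (Continuous.measurable ?_)
  fun_prop

/-- The total mass of the unnormalized Gaussian. -/
noncomputable def gaussMass (d : ℕ) (b : ℝ) : ℝ≥0∞ :=
  ∫⁻ x : EuclideanSpace ℝ (Fin d), gaussWeight b x

lemma gaussMass_eq (d : ℕ) {b : ℝ} (hb : 0 < b) :
    gaussMass d b = ENNReal.ofReal ((Real.pi / b) ^ ((d : ℝ) / 2)) := by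
  have h := GaussianFourier.integral_rexp_neg_mul_sq_norm (V := EuclideanSpace ℝ (Fin d)) hb
  have hpos : 0 < (Real.pi / b) ^ ((d : ℝ) / 2) := by positivity
  rw [finrank_euclideanSpace_fin] at h
  have hint : Integrable fun v : EuclideanSpace ℝ (Fin d) => Real.exp (-b * ‖v‖ ^ 2) :=
    Integrable.of_integral_ne_zero (by rw [h]; exact hpos.ne')
  rw [← h, ofReal_integral_eq_lintegral_ofReal hint
    (Filter.Eventually.of_forall fun _ => (Real.exp_pos _).le)]
  rfl

lemma gaussMass_ne_zero (d : ℕ) {b : ℝ} (hb : 0 < b) : gaussMass d b ≠ 0 := by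
  rw [gaussMass_eq d hb, ne_eq, ENNReal.ofReal_eq_zero, not_le]
  positivity

lemma gaussMass_ne_top (d : ℕ) {b : ℝ} (hb : 0 < b) : gaussMass d b ≠ ⊤ := by
  rw [gaussMass_eq d hb]
  exact ENNReal.ofReal_ne_top

/-- The centred Gaussian with covariance `(2 b)⁻¹ • 1`. -/
noncomputable def gaussMeasure (d : ℕ) (b : ℝ) : Measure (EuclideanSpace ℝ (Fin d)) :=
  (gaussMass d b)⁻¹ • volume.withDensity (gaussWeight b)

lemma isProbabilityMeasure_gaussMeasure (d : ℕ) {b : ℝ} (hb : 0 < b) :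
    IsProbabilityMeasure (gaussMeasure d b) := by
  refine ⟨?_⟩
  rw [gaussMeasure, Measure.smul_apply, withDensity_apply _ MeasurableSet.univ,
    Measure.restrict_univ, smul_eq_mul]
  exact ENNReal.inv_mul_cancel (gaussMass_ne_zero d hb) (gaussMass_ne_top d hb)

lemma lintegral_gaussMeasure {d : ℕ} {b : ℝ} {f : EuclideanSpace ℝ (Fin d) → ℝ≥0∞}
    (hf : Measurable f) :
    ∫⁻ x, f x ∂gaussMeasure d b = (gaussMass d b)⁻¹ * ∫⁻ x, gaussWeight b x * f x := by
  rw [gaussMeasure, lintegral_smul_measure, smul_eq_mul,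
    lintegral_withDensity_eq_lintegral_mul _ (measurable_gaussWeight b) hf]
  rfl

/-- Moment generating function of the Gaussian, by completing the square. -/
lemma lintegral_exp_inner_gaussMeasure {d : ℕ} {b : ℝ} (hb : 0 < b)
    (x : EuclideanSpace ℝ (Fin d)) :
    ∫⁻ η, ENNReal.ofReal (Real.exp ⟪η, x⟫) ∂gaussMeasure d b
      = ENNReal.ofReal (Real.exp (‖x‖ ^ 2 / (4 * b))) := by
  have hsq : ∀ η : EuclideanSpace ℝ (Fin d), gaussWeight b η * ENNReal.ofReal (Real.exp ⟪η, x⟫)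
      = ENNReal.ofReal (Real.exp (‖x‖ ^ 2 / (4 * b))) * gaussWeight b (η - (1 / (2 * b)) • x) := by
    intro η
    unfold gaussWeight
    rw [← ENNReal.ofReal_mul (Real.exp_pos _).le, ← ENNReal.ofReal_mul (Real.exp_pos _).le,
      ← Real.exp_add, ← Real.exp_add, norm_sub_sq_real, inner_smul_right, norm_smul, mul_pow,
      Real.norm_eq_abs, sq_abs]
    congr 2
    field_simp
    ring
  rw [lintegral_gaussMeasure (Measurable.ennreal_ofReal (Continuous.measurable (by fun_prop)))]
  simp_rw [hsq]
  rw [lintegral_const_mul' _ _ ENNReal.ofReal_ne_top,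
    lintegral_sub_right_eq_self (gaussWeight b), mul_left_comm]
  change _ * (_ * gaussMass d b) = _
  rw [ENNReal.inv_mul_cancel (gaussMass_ne_zero d hb) (gaussMass_ne_top d hb), mul_one]

/-- First absolute moment of the marginals, from `|t| ≤ cosh t` applied to `t = (4 / Δ) ⟪η, x⟫`. -/
lemma lintegral_abs_inner_gaussMeasure_le {d : ℕ} {Δ : ℝ} (hΔ : 0 < Δ)
    (x : EuclideanSpace ℝ (Fin d)) (hx : ‖x‖ ≤ 1) :
    ∫⁻ η, ENNReal.ofReal |⟪η, x⟫| ∂gaussMeasure d (8 / Δ ^ 2) ≤ ENNReal.ofReal (Δ / 2) := by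
  have hb : 0 < 8 / Δ ^ 2 := by positivity
  have hpt : ∀ η : EuclideanSpace ℝ (Fin d), ENNReal.ofReal |⟪η, x⟫|
      ≤ ENNReal.ofReal (Δ / 8) * (ENNReal.ofReal (Real.exp ⟪η, (4 / Δ) • x⟫)
        + ENNReal.ofReal (Real.exp ⟪η, -((4 / Δ) • x)⟫)) := by
    intro η
    rw [← ENNReal.ofReal_add (Real.exp_pos _).le (Real.exp_pos _).le,
      ← ENNReal.ofReal_mul (by positivity)]
    apply ENNReal.ofReal_le_ofReal
    rw [inner_neg_right, inner_smul_right]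
    set t := 4 / Δ * ⟪η, x⟫ with ht
    have hin : ⟪η, x⟫ = Δ / 4 * t := by rw [ht]; field_simp
    rw [hin, abs_mul, abs_of_pos (by positivity : 0 < Δ / 4)]
    have hcosh : 2 * |t| ≤ Real.exp t + Real.exp (-t) := by
      rcases abs_cases t with ⟨h, h0⟩ | ⟨h, h0⟩ <;> rw [h]
      · nlinarith [Real.quadratic_le_exp_of_nonneg h0, Real.add_one_le_exp (-t), sq_nonneg (t - 2)]
      · nlinarith [Real.quadratic_le_exp_of_nonneg (x := -t) (by linarith),
          Real.add_one_le_exp t, sq_nonneg (t + 2)]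
    nlinarith
  have hmgf : ‖(4 / Δ) • x‖ ^ 2 / (4 * (8 / Δ ^ 2)) ≤ 1 / 2 := by
    rw [norm_smul, mul_pow, Real.norm_eq_abs, sq_abs]
    have : (4 / Δ) ^ 2 * ‖x‖ ^ 2 / (4 * (8 / Δ ^ 2)) = ‖x‖ ^ 2 / 2 := by field_simp; ring
    rw [this]
    nlinarith [norm_nonneg x]
  have hhalf : Real.exp (1 / 2) ≤ 2 := by
    have h1 : Real.exp (1 / 2) * Real.exp (1 / 2) = Real.exp 1 := by
      rw [← Real.exp_add]; norm_num
    nlinarith [Real.exp_one_lt_d9, Real.exp_pos (1 / 2)]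
  have hle : ENNReal.ofReal (Real.exp (‖(4 / Δ) • x‖ ^ 2 / (4 * (8 / Δ ^ 2))))
      ≤ ENNReal.ofReal 2 :=
    ENNReal.ofReal_le_ofReal ((Real.exp_le_exp.mpr hmgf).trans hhalf)
  refine (lintegral_mono hpt).trans ?_
  rw [lintegral_const_mul' _ _ ENNReal.ofReal_ne_top,
    lintegral_add_left (Measurable.ennreal_ofReal (Continuous.measurable (by fun_prop))),
    lintegral_exp_inner_gaussMeasure hb, lintegral_exp_inner_gaussMeasure hb, norm_neg]
  calc _ ≤ ENNReal.ofReal (Δ / 8) * (ENNReal.ofReal 2 + ENNReal.ofReal 2) := by gcongr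
    _ = ENNReal.ofReal (Δ / 2) := by
      rw [← ENNReal.ofReal_add (by norm_num) (by norm_num), ← ENNReal.ofReal_mul (by positivity)]
      congr 1
      ring

/-- Translating a symmetric set by `v` costs at most a factor `exp (b ‖v‖ ^ 2)`: averaging over
`± η` and using `1 ≤ cosh` removes the cross term `⟪η, v⟫`. -/
lemma gaussMeasure_translate_ge {d : ℕ} (b : ℝ)
    {B : Set (EuclideanSpace ℝ (Fin d))} (hB : MeasurableSet B) (hsymm : ∀ η, -η ∈ B ↔ η ∈ B)
    (v : EuclideanSpace ℝ (Fin d)) :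
    ENNReal.ofReal (Real.exp (-b * ‖v‖ ^ 2)) * gaussMeasure d b B
      ≤ gaussMeasure d b {θ | θ - v ∈ B} := by
  have hB' : MeasurableSet {θ | θ - v ∈ B} := (measurable_sub_const v) hB
  set f : EuclideanSpace ℝ (Fin d) → ℝ≥0∞ := fun η => B.indicator (fun η => gaussWeight b (η + v)) η
    with hf
  have hfm : Measurable f :=
    ((measurable_gaussWeight b).comp (measurable_add_const v)).indicator hB
  have hR : ∫⁻ θ in {θ | θ - v ∈ B}, gaussWeight b θ = ∫⁻ η, f η := by
    rw [← lintegral_indicator hB', ← lintegral_add_right_eq_self _ v]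
    refine lintegral_congr fun η => ?_
    have hmem : η + v ∈ {θ | θ - v ∈ B} ↔ η ∈ B := by
      rw [Set.mem_ofPred_eq, add_sub_cancel_right]
    by_cases hη : η ∈ B
    · simp only [hf, Set.indicator_of_mem hη, Set.indicator_of_mem (hmem.2 hη)]
    · simp only [hf, Set.indicator_of_notMem hη, Set.indicator_of_notMem (fun h => hη (hmem.1 h))]
  have hneg : ∫⁻ η, f (-η) = ∫⁻ η, f η := lintegral_neg_eq_self f
  have hpt : ∀ η, 2 * (ENNReal.ofReal (Real.exp (-b * ‖v‖ ^ 2)) * B.indicator (gaussWeight b) η)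
      ≤ f η + f (-η) := by
    intro η
    by_cases hη : η ∈ B
    · simp only [hf, Set.indicator_of_mem hη, Set.indicator_of_mem ((hsymm η).2 hη)]
      unfold gaussWeight
      rw [← ENNReal.ofReal_mul (Real.exp_pos _).le, ← ENNReal.ofReal_add (Real.exp_pos _).le
        (Real.exp_pos _).le, two_mul, ← ENNReal.ofReal_add (by positivity) (by positivity), ← two_mul]
      apply ENNReal.ofReal_le_ofReal
      rw [norm_add_sq_real, norm_add_sq_real, norm_neg, inner_neg_left, ← Real.exp_add]
      set e := -b * ‖v‖ ^ 2 + -b * ‖η‖ ^ 2 with he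
      set s := b * (2 * ⟪η, v⟫) with hs
      have h1 : -b * (‖η‖ ^ 2 + 2 * ⟪η, v⟫ + ‖v‖ ^ 2) = e + -s := by rw [he, hs]; ring
      have h2 : -b * (‖η‖ ^ 2 + 2 * -⟪η, v⟫ + ‖v‖ ^ 2) = e + s := by rw [he, hs]; ring
      rw [h1, h2, Real.exp_add e (-s), Real.exp_add e s]
      nlinarith [Real.exp_pos e, Real.add_one_le_exp s, Real.add_one_le_exp (-s)]
    · simp [Set.indicator_of_notMem hη]
  have hmain : ENNReal.ofReal (Real.exp (-b * ‖v‖ ^ 2)) * ∫⁻ η in B, gaussWeight b η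
      ≤ ∫⁻ η, f η := by
    have h := lintegral_mono (μ := volume) hpt
    rw [lintegral_const_mul' _ _ (by norm_num), lintegral_const_mul' _ _ ENNReal.ofReal_ne_top,
      lintegral_add_left hfm, hneg, ← two_mul, lintegral_indicator hB] at h
    exact (ENNReal.mul_le_mul_iff_right (by norm_num) (by norm_num)).1 h
  rw [gaussMeasure, Measure.smul_apply, Measure.smul_apply, withDensity_apply _ hB,
    withDensity_apply _ hB', smul_eq_mul, smul_eq_mul, mul_left_comm, hR]
  gcongr

lemma integrable_abs_inner {d : ℕ} (μ : Measure {x : EuclideanSpace ℝ (Fin d) // ‖x‖ ≤ 1})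
    [IsProbabilityMeasure μ] (η : EuclideanSpace ℝ (Fin d)) :
    Integrable (fun x : {x : EuclideanSpace ℝ (Fin d) // ‖x‖ ≤ 1} =>
      |⟪η, (x : EuclideanSpace ℝ (Fin d))⟫|) μ := by
  refine Integrable.of_bound (C := ‖η‖)
    (by apply Continuous.aestronglyMeasurable; fun_prop) (Filter.Eventually.of_forall fun x => ?_)
  rw [Real.norm_eq_abs, abs_abs]
  calc _ ≤ ‖η‖ * ‖(x : EuclideanSpace ℝ (Fin d))‖ := abs_real_inner_le_norm _ _
    _ ≤ ‖η‖ * 1 := by gcongr; exact x.2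
    _ = ‖η‖ := mul_one _

lemma dcImproperLin_le (d : ℕ) {Δ : ℝ} (hΔ : 0 < Δ) :
    dcImproperLin d Δ ≤ ENNReal.ofReal (2 * Real.exp (8 / Δ ^ 2)) := by
  have hb : 0 < 8 / Δ ^ 2 := by positivity
  have hP := isProbabilityMeasure_gaussMeasure d hb
  refine iInf_le_of_le ⟨gaussMeasure d (8 / Δ ^ 2), hP⟩ (iSup₂_le fun ⟨μ, hμ⟩ θs => ?_)
  rw [ENNReal.inv_le_iff_inv_le, ← ENNReal.ofReal_inv_of_pos (by positivity)]
  set g : EuclideanSpace ℝ (Fin d) → ℝ≥0∞ :=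
    fun η => ∫⁻ x, ENNReal.ofReal |⟪η, (x : EuclideanSpace ℝ (Fin d))⟫| ∂μ with hg
  have huncurry : Measurable (Function.uncurry fun (η : EuclideanSpace ℝ (Fin d))
      (x : {x : EuclideanSpace ℝ (Fin d) // ‖x‖ ≤ 1}) =>
      ENNReal.ofReal |⟪η, (x : EuclideanSpace ℝ (Fin d))⟫|) := by
    refine Measurable.ennreal_ofReal (Continuous.measurable ?_)
    fun_prop
  have hgm : Measurable g := huncurry.lintegral_prod_right'
  have hset : ∀ η : EuclideanSpace ℝ (Fin d),
      (∫ x, |⟪η, (x : EuclideanSpace ℝ (Fin d))⟫| ∂μ) ≤ Δ ↔ g η ≤ ENNReal.ofReal Δ := by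
    intro η
    simp only [hg]
    rw [← ofReal_integral_eq_lintegral_ofReal (integrable_abs_inner μ η)
      (Filter.Eventually.of_forall fun _ => abs_nonneg _), ENNReal.ofReal_le_ofReal_iff hΔ.le]
  simp only [hset]
  set B : Set (EuclideanSpace ℝ (Fin d)) := {η | g η ≤ ENNReal.ofReal Δ} with hB
  have hBm : MeasurableSet B := measurableSet_le hgm measurable_const
  have hsymm : ∀ η, -η ∈ B ↔ η ∈ B := by
    intro η
    simp only [hB, hg, Set.mem_ofPred_eq, inner_neg_left, abs_neg]
  have hmean : ∫⁻ η, g η ∂gaussMeasure d (8 / Δ ^ 2) ≤ ENNReal.ofReal (Δ / 2) := by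
    rw [hg, lintegral_lintegral_swap huncurry.aemeasurable]
    calc _ ≤ ∫⁻ _x, ENNReal.ofReal (Δ / 2) ∂μ :=
          lintegral_mono fun x => lintegral_abs_inner_gaussMeasure_le hΔ x.1 x.2
      _ = _ := by rw [lintegral_const, measure_univ, mul_one]
  have hBc : gaussMeasure d (8 / Δ ^ 2) Bᶜ ≤ ENNReal.ofReal (1 / 2) := by
    have hmarkov := (mul_meas_ge_le_lintegral hgm (ENNReal.ofReal Δ)).trans hmean
    have hsub : Bᶜ ⊆ {η | ENNReal.ofReal Δ ≤ g η} := by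
      intro η hη
      rw [Set.mem_compl_iff, hB, Set.mem_ofPred_eq, not_le] at hη
      exact hη.le
    have h := (mul_le_mul_right (measure_mono hsub) (ENNReal.ofReal Δ)).trans hmarkov
    rw [show Δ / 2 = Δ * (1 / 2) by ring, ENNReal.ofReal_mul hΔ.le] at h
    exact (ENNReal.mul_le_mul_iff_right (by simpa using hΔ) ENNReal.ofReal_ne_top).1 h
  have hBhalf : ENNReal.ofReal (1 / 2) ≤ gaussMeasure d (8 / Δ ^ 2) B := by
    have h1 := prob_add_prob_compl (μ := gaussMeasure d (8 / Δ ^ 2)) hBm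
    have h2 : ENNReal.ofReal (1 / 2) + ENNReal.ofReal (1 / 2) = 1 := by
      rw [← ENNReal.ofReal_add (by norm_num) (by norm_num)]
      norm_num
    rw [← ENNReal.add_le_add_iff_right (ENNReal.ofReal_ne_top (r := 1 / 2)), h2, ← h1]
    gcongr
  calc ENNReal.ofReal (2 * Real.exp (8 / Δ ^ 2))⁻¹
      = ENNReal.ofReal (Real.exp (-(8 / Δ ^ 2))) * ENNReal.ofReal (1 / 2) := by
        rw [← ENNReal.ofReal_mul (Real.exp_pos _).le, Real.exp_neg, mul_inv]
        congr 1
        ring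
    _ ≤ ENNReal.ofReal (Real.exp (-(8 / Δ ^ 2) * ‖(θs : EuclideanSpace ℝ (Fin d))‖ ^ 2))
          * gaussMeasure d (8 / Δ ^ 2) B := by
        gcongr
        have : ‖(θs : EuclideanSpace ℝ (Fin d))‖ ^ 2 ≤ 1 := by
          nlinarith [norm_nonneg (θs : EuclideanSpace ℝ (Fin d)), θs.2]
        nlinarith
    _ ≤ _ := gaussMeasure_translate_ge _ hBm hsymm _

/-- **Separation between proper and improper linear regression via fractional covering
numbers.** (i) There are universal constants `c > 0` and `d₀` with
`log DC_{1/2}(F_Lin, F_Lin) ≥ c d` for all `d ≥ d₀`; (ii) there are universal constants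
`C₀` and `Δ₀ ∈ (0,1)` with `log DC_Δ(F_Lin, F_Lin⁺) ≤ (C₀/Δ²) log(1/Δ)` for all `d ≥ 1`
and `Δ ∈ (0, Δ₀]`. -/
theorem proper_improper_linear_separation :
    (∃ c : ℝ, 0 < c ∧ ∃ d₀ : ℕ, ∀ d : ℕ, d₀ ≤ d →
      ((c * d : ℝ) : EReal) ≤ ENNReal.log (dcProperLin d (1 / 2))) ∧
    (∃ C₀ Δ₀ : ℝ, 0 < Δ₀ ∧ Δ₀ < 1 ∧ ∀ d : ℕ, 1 ≤ d → ∀ Δ : ℝ, 0 < Δ → Δ ≤ Δ₀ →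
      ENNReal.log (dcImproperLin d Δ) ≤ ((C₀ / Δ ^ 2 * Real.log (1 / Δ) : ℝ) : EReal)) := by
  constructor
  · refine ⟨1 / 8, by norm_num, 1, fun d hd => ?_⟩
    refine le_trans (le_of_eq ?_) (ENNReal.log_le_log (exp_le_dcProperLin hd))
    rw [ENNReal.log_ofReal_of_pos (Real.exp_pos _), Real.log_exp]
    congr 1
    ring
  · refine ⟨20, 1 / 2, by norm_num, by norm_num, fun d _ Δ hΔ hΔ' => ?_⟩
    refine (ENNReal.log_le_log (dcImproperLin_le d hΔ)).trans ?_
    rw [ENNReal.log_ofReal_of_pos (by positivity), EReal.coe_le_coe_iff,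
      Real.log_mul (by norm_num) (Real.exp_pos _).ne', Real.log_exp]
    have hlog : Real.log 2 ≤ Real.log (1 / Δ) := by
      apply Real.log_le_log (by norm_num)
      rw [le_div_iff₀ hΔ]
      linarith
    have hu : 1 ≤ 1 / Δ ^ 2 := by
      rw [le_div_iff₀ (by positivity)]
      nlinarith
    have h20 : 20 / Δ ^ 2 = 20 * (1 / Δ ^ 2) := by ring
    have h8 : 8 / Δ ^ 2 = 8 * (1 / Δ ^ 2) := by ring
    rw [h20, h8]
    nlinarith [Real.log_two_gt_d9, Real.log_two_lt_d9]
end
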